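/- arXiv:2105.07247 — 4 statements merged into one kernel-verified Lean document; each statement's English description precedes it below -/
import Mathlib

section
/- Let G be a finite group, N a normal subgroup of G with Q = G/N abelian, and q ∈ G. Then the number of conjugacy classes of G contained in the coset qN equals the number of orbits of the action of the character group Q̂ on the set of complex irreducible characters of G that contain a character ρ which is not identically zero on qN. -/
open scoped BigOperators

/-- `ρ : G → ℂ` is the character of an irreducible (simple) finite-dimensional
complex representation of `G`. -/
def IsIrrChar (G : Type) [Group G] (ρ : G → ℂ) : Prop :=
  ∃ V : FDRep ℂ G, CategoryTheory.Simple V ∧ ρ = V.character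

/-- `Θ : G → ℂ` is the character of some finite-dimensional complex representation of `G`. -/
def IsChar (G : Type) [Group G] (Θ : G → ℂ) : Prop :=
  ∃ V : FDRep ℂ G, Θ = V.character

variable {G : Type} [Group G]

/-- The action of a character `χ ∈ Q̂` (where `Q = G ⧸ N`) on a function `ρ : G → ℂ`:
`(χ · ρ)(g) = χ(gN) · ρ(g)`. -/
def charMul (N : Subgroup G) [N.Normal] (χ : (G ⧸ N) →* ℂˣ) (ρ : G → ℂ) : G → ℂ :=
  fun g => (χ (g : G ⧸ N) : ℂ) * ρ g

/-- The orbit of `ρ` under the tensoring action of `Q̂ = Hom(G ⧸ N, ℂˣ)`. -/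
def qhatOrbit (N : Subgroup G) [N.Normal] (ρ : G → ℂ) : Set (G → ℂ) :=
  {ρ' | ∃ χ : (G ⧸ N) →* ℂˣ, ρ' = charMul N χ ρ}

/-- The coset `qN`, as a subset of `G`. -/
def coset (N : Subgroup G) [N.Normal] (q : G) : Set G :=
  {g | (g : G ⧸ N) = (q : G ⧸ N)}

/-- `C_q`: the set of conjugacy classes of `G` contained in the coset `qN`. -/
def Cset (N : Subgroup G) [N.Normal] (q : G) : Set (ConjClasses G) :=
  {c | c.carrier ⊆ coset N q}

/-- `R_q`: the set of `Q̂`-orbits on the irreducible characters of `G`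
containing a character not identically zero on `qN`. -/
def Rset (N : Subgroup G) [N.Normal] (q : G) : Set (Set (G → ℂ)) :=
  {S | (∃ ρ, IsIrrChar G ρ ∧ S = qhatOrbit N ρ) ∧ ∃ ρ' ∈ S, ∃ g ∈ coset N q, ρ' g ≠ 0}

/-- The class function `π_x` for `x ∈ Q = G ⧸ N`:
`π_x(g) = (1/#Q̂) ∑_{χ ∈ Q̂} conj(χ(x)) χ(gN)`. -/
noncomputable def piQ (N : Subgroup G) [N.Normal] (x : G ⧸ N) : G → ℂ :=
  fun g => (Nat.card ((G ⧸ N) →* ℂˣ) : ℂ)⁻¹ *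
    ∑ᶠ χ : (G ⧸ N) →* ℂˣ, (starRingEnd ℂ) (χ x : ℂ) * (χ (g : G ⧸ N) : ℂ)

/-- The space of class functions on `G`, as a submodule of `G → ℂ`. -/
noncomputable def classFunSubmodule (G : Type) [Group G] : Submodule ℂ (G → ℂ) where
  carrier := {f | ∀ g h : G, f (h * g * h⁻¹) = f g}
  add_mem' := by intro a b ha hb g h; simp only [Pi.add_apply, ha g h, hb g h]
  zero_mem' := by intro g h; rfl
  smul_mem' := by intro c f hf g h; simp only [Pi.smul_apply, hf g h]

/-- The space of class functions on `G` vanishing outside the coset `qN`. -/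
noncomputable def cosetClassFun (N : Subgroup G) [N.Normal] (q : G) : Submodule ℂ (G → ℂ) where
  carrier := {f | (∀ g h : G, f (h * g * h⁻¹) = f g) ∧ ∀ g, g ∉ coset N q → f g = 0}
  add_mem' := by
    intro a b ha hb
    exact ⟨fun g h => by simp only [Pi.add_apply, ha.1 g h, hb.1 g h],
      fun g hg => by simp only [Pi.add_apply, ha.2 g hg, hb.2 g hg, add_zero]⟩
  zero_mem' := ⟨fun g h => rfl, fun g hg => rfl⟩
  smul_mem' := by
    intro c f hf
    exact ⟨fun g h => by simp only [Pi.smul_apply, hf.1 g h],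
      fun g hg => by simp only [Pi.smul_apply, hf.2 g hg, smul_zero]⟩

section Aux

open Representation in
lemma aux_irr_of_norm [Fintype G] {V : Type} [AddCommGroup V] [Module ℂ V]
    [FiniteDimensional ℂ V] (σ : Representation ℂ G V)
    (h : ∑ g : G, σ.character g * σ.character g⁻¹ = Nat.card G) :
    IsIrrChar G σ.character :=
  ⟨FDRep.of σ, (FDRep.simple_iff_char_is_norm_one (FDRep.of σ)).2 h, rfl⟩

lemma aux_irr [Fintype G] {V : Type} [AddCommGroup V] [Module ℂ V]
    [FiniteDimensional ℂ V] (σ : Representation ℂ G V) [σ.IsIrreducible] :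
    IsIrrChar G σ.character := by
  classical
  apply aux_irr_of_norm
  have h0 : (Nat.card G : ℂ) ≠ 0 := NeZero.ne _
  have := invertibleOfNonzero h0
  have h := Representation.char_orthonormal σ σ
  rw [if_pos ⟨Representation.Equiv.refl σ⟩] at h
  field_simp at h
  simpa using h

lemma aux_irr_norm [Fintype G] {ρ : G → ℂ} (h : IsIrrChar G ρ) :
    ∑ g : G, ρ g * ρ g⁻¹ = Nat.card G := by
  obtain ⟨V, hV, rfl⟩ := h
  exact (FDRep.simple_iff_char_is_norm_one V).1 hV

lemma aux_irr_orth [Fintype G] {ρ σ : G → ℂ} (h : IsIrrChar G ρ) (h' : IsIrrChar G σ)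
    (hne : ρ ≠ σ) : ∑ g : G, ρ g * σ g⁻¹ = 0 := by
  classical
  obtain ⟨V, hV, rfl⟩ := h
  obtain ⟨W, hW, rfl⟩ := h'
  have h0 : (Nat.card G : ℂ) ≠ 0 := NeZero.ne _
  have := invertibleOfNonzero h0
  have h := FDRep.char_orthonormal V W
  rw [if_neg (fun ⟨i⟩ => hne (FDRep.char_iso i))] at h
  simpa [h0] using h

lemma aux_irr_conj {ρ : G → ℂ} (h : IsIrrChar G ρ) (g k : G) : ρ (k * g * k⁻¹) = ρ g := by
  obtain ⟨V, hV, rfl⟩ := h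
  exact V.char_conj g k

lemma aux_irr_mul [Fintype G] (N : Subgroup G) [N.Normal] (χ : (G ⧸ N) →* ℂˣ) {ρ : G → ℂ}
    (h : IsIrrChar G ρ) : IsIrrChar G (charMul N χ ρ) := by
  have hn := aux_irr_norm h
  obtain ⟨V, hV, rfl⟩ := h
  let σ : Representation ℂ G V :=
    { toFun := fun g => (χ (g : G ⧸ N) : ℂ) • V.ρ g
      map_one' := by simp
      map_mul' := fun a b => by
        ext v
        simp [smul_smul, mul_comm] }
  have e : σ.character = charMul N χ V.character := by
    ext g
    simp [σ, Representation.character, charMul, FDRep.character]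
  rw [← e]
  apply aux_irr_of_norm
  rw [← hn, e]
  refine Finset.sum_congr rfl fun g _ => ?_
  simp only [charMul, QuotientGroup.mk_inv, map_inv, Units.val_inv_eq_inv_val]
  have := (χ (g : G ⧸ N)).ne_zero
  field_simp

lemma aux_act_zero [Fintype G] {V : Type} [AddCommGroup V] [Module ℂ V]
    [FiniteDimensional ℂ V] (σ : Representation ℂ G V) [σ.IsIrreducible]
    (f : G → ℂ) (hf : ∀ g h : G, f (h * g * h⁻¹) = f g)
    (h0 : ∑ g, f g * σ.character g = 0) : ∑ g, f g • σ g = 0 := by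
  let L : Representation.IntertwiningMap σ σ :=
    ⟨∑ g, f g • σ g, fun k => by
      have : (∑ g, f g • σ g) * σ k = σ k * ∑ g, f g • σ g := by
        rw [Finset.sum_mul, Finset.mul_sum]
        refine Fintype.sum_equiv (MulAut.conj k⁻¹).toEquiv _ _ fun g => ?_
        have : f (k⁻¹ * g * k) = f g := by simpa using hf g k⁻¹
        simp [← map_mul, this, ← mul_assoc]
      exact this⟩
  obtain ⟨c, hc⟩ :=
    (Representation.IsIrreducible.algebraMap_intertwiningMap_bijective_of_isAlgClosed
      (ρ := σ)).2 L
  have hL : ∑ g, f g • σ g = c • LinearMap.id := by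
    have := congrArg Representation.IntertwiningMap.toLinearMap hc
    rw [show ∑ g, f g • σ g = L.toLinearMap from rfl, ← this]
    rfl
  have ht := congrArg (LinearMap.trace ℂ V) hL
  have hnt : Nontrivial V := by
    have : IsSimpleModule (MonoidAlgebra ℂ G) σ.asModule := inferInstance
    exact IsSimpleModule.nontrivial (MonoidAlgebra ℂ G) σ.asModule
  have hd : (Module.finrank ℂ V : ℂ) ≠ 0 := by exact_mod_cast Module.finrank_pos.ne'
  have : ∑ g, f g * (LinearMap.trace ℂ V) (σ g) = 0 := h0
  simp only [map_sum, map_smul, smul_eq_mul, this, LinearMap.trace_id] at ht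
  have hc0 : c = 0 := by
    rcases mul_eq_zero.1 ht.symm with h | h
    · exact h
    · exact absurd h hd
  rw [hL, hc0, zero_smul]

lemma aux_simple [Fintype G] (f : G → ℂ) (hf : ∀ g h : G, f (h * g * h⁻¹) = f g)
    (h0 : ∀ ρ, IsIrrChar G ρ → ∑ g, f g * ρ g = 0)
    (M : Type) [AddCommGroup M] [Module (MonoidAlgebra ℂ G) M]
    [IsSimpleModule (MonoidAlgebra ℂ G) M] (x : M) :
    (∑ g, MonoidAlgebra.single g (f g) : MonoidAlgebra ℂ G) • x = 0 := by
  let : Module ℂ M := Module.compHom M (algebraMap ℂ (MonoidAlgebra ℂ G))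
  have : IsScalarTower ℂ (MonoidAlgebra ℂ G) M := ⟨fun c b y => by
    rw [Algebra.smul_def, mul_smul]; rfl⟩
  let σ := Representation.ofModule' (k := ℂ) (G := G) M
  have hal : ∀ (b : MonoidAlgebra ℂ G) (y : M), σ.asAlgebraHom b y = b • y := by
    intro b y
    have : σ.asAlgebraHom = Algebra.lsmul ℂ ℂ M := by
      simp [σ, Representation.asAlgebraHom, Representation.ofModule']
    rw [this]; rfl
  have hσ : σ.IsIrreducible := by
    rw [Representation.irreducible_iff_isSimpleModule_asModule]
    let e : σ.asModule ≃ₗ[MonoidAlgebra ℂ G] M :=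
      { σ.asModuleEquiv.toAddEquiv with
        map_smul' := fun b y => by
          have := σ.asModuleEquiv_map_smul b y
          rw [hal] at this
          exact this }
    exact IsSimpleModule.congr e
  have hfin : FiniteDimensional ℂ M := Module.Finite.trans (MonoidAlgebra ℂ G) _
  have hz := aux_act_zero σ f hf (h0 _ (aux_irr σ))
  have hz' : σ.asAlgebraHom (∑ g, MonoidAlgebra.single g (f g)) = 0 := by
    rw [← hz]; simp [Representation.asAlgebraHom_single]
  rw [← hal, hz', LinearMap.zero_apply]

lemma aux_complete [Fintype G] (f : G → ℂ) (hf : ∀ g h : G, f (h * g * h⁻¹) = f g)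
    (h0 : ∀ ρ, IsIrrChar G ρ → ∑ g, f g * ρ g = 0) : f = 0 := by
  classical
  have : NeZero (Nat.card G : ℂ) := inferInstance
  have hss : IsSemisimpleRing (MonoidAlgebra ℂ G) := inferInstance
  let a : MonoidAlgebra ℂ G := ∑ g, MonoidAlgebra.single g (f g)
  have ha : a ∈ Ring.jacobson (MonoidAlgebra ℂ G) := by
    rw [Ring.jacobson, Module.jacobson]
    simp only [Submodule.mem_sInf]
    intro m hm
    have : IsSimpleModule (MonoidAlgebra ℂ G) (MonoidAlgebra ℂ G ⧸ m) :=
      isSimpleModule_iff_isCoatom.2 hm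
    have h1 := aux_simple f hf h0 (MonoidAlgebra ℂ G ⧸ m) (Submodule.Quotient.mk 1)
    rw [← Submodule.Quotient.mk_smul, Submodule.Quotient.mk_eq_zero] at h1
    simpa using h1
  rw [IsSemisimpleRing.jacobson_eq_bot, Submodule.mem_bot] at ha
  ext g
  have := congrArg (fun x : MonoidAlgebra ℂ G => x.coeff g) ha
  simpa [a, Finsupp.single_apply] using this


lemma aux_class {ρ : G → ℂ} (h : ∀ g k : G, ρ (k * g * k⁻¹) = ρ g) (g : G) :
    ρ (Quotient.out (s := IsConj.setoid G) (ConjClasses.mk g)) = ρ g := by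
  have : IsConj (Quotient.out (s := IsConj.setoid G) (ConjClasses.mk g)) g :=
    Quotient.mk_out (s := IsConj.setoid G) g
  obtain ⟨c, hc⟩ := isConj_iff.1 this
  rw [← h _ c, hc]

lemma aux_mem_Cset (N : Subgroup G) [N.Normal] (hQ : ∀ a b : G ⧸ N, a * b = b * a) (q g : G) :
    ConjClasses.mk g ∈ Cset N q ↔ g ∈ coset N q := by
  constructor
  · intro h
    exact h ConjClasses.mem_carrier_mk
  · intro h k hk
    rw [ConjClasses.mem_carrier_iff_mk_eq, ConjClasses.mk_eq_mk_iff_isConj] at hk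
    obtain ⟨c, hc⟩ := isConj_iff.1 hk
    have : ((c * k * c⁻¹ : G) : G ⧸ N) = (k : G ⧸ N) := by
      rw [QuotientGroup.mk_mul, hQ, ← QuotientGroup.mk_mul]; simp [← mul_assoc]
    change (k : G ⧸ N) = q
    rw [← this, hc]; exact h

/-- Orthogonality of the characters of the quotient. -/
lemma aux_exists_char [Finite G] (N : Subgroup G) [N.Normal]
    (hQ : ∀ a b : G ⧸ N, a * b = b * a) (a : G ⧸ N) (ha : a ≠ 1) :
    ∃ χ : (G ⧸ N) →* ℂˣ, χ a ≠ 1 := by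
  let : CommGroup (G ⧸ N) := { (inferInstance : Group (G ⧸ N)) with mul_comm := hQ }
  exact CommGroup.exists_apply_ne_one_of_hasEnoughRootsOfUnity (G ⧸ N) ℂ ha

instance aux_finite [Finite G] (N : Subgroup G) [N.Normal] : Finite ((G ⧸ N) →* ℂˣ) :=
  inferInstance

lemma aux_sum_char [Finite G] (N : Subgroup G) [N.Normal] [Fintype ((G ⧸ N) →* ℂˣ)]
    (hQ : ∀ a b : G ⧸ N, a * b = b * a) (a : G ⧸ N) (ha : a ≠ 1) :
    ∑ χ : (G ⧸ N) →* ℂˣ, (χ a : ℂ) = 0 := by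
  obtain ⟨ψ, hψ⟩ := aux_exists_char N hQ a ha
  have h : ∑ χ : (G ⧸ N) →* ℂˣ, (χ a : ℂ) = (ψ a : ℂ) * ∑ χ : (G ⧸ N) →* ℂˣ, (χ a : ℂ) := by
    rw [Finset.mul_sum]
    exact (Fintype.sum_equiv (Equiv.mulLeft ψ) _ _ fun χ => by simp).symm
  have h2 : ((ψ a : ℂ) - 1) * ∑ χ : (G ⧸ N) →* ℂˣ, (χ a : ℂ) = 0 := by
    rw [sub_mul, one_mul, ← h, sub_self]
  rcases mul_eq_zero.1 h2 with h3 | h3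
  · exact absurd (Units.ext (by simpa using sub_eq_zero.1 h3)) hψ
  · exact h3

open Classical in
lemma aux_K [Fintype G] (N : Subgroup G) [N.Normal] [Fintype ((G ⧸ N) →* ℂˣ)]
    (hQ : ∀ a b : G ⧸ N, a * b = b * a) (q : G) (ρ σ : G → ℂ) :
    (Fintype.card ((G ⧸ N) →* ℂˣ) : ℂ) *
        ∑ g : G, (if g ∈ coset N q then ρ g * σ g⁻¹ else 0) =
      ∑ χ : (G ⧸ N) →* ℂˣ, (χ (q : G ⧸ N) : ℂ)⁻¹ * ∑ g : G, charMul N χ ρ g * σ g⁻¹ := by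
  simp_rw [Finset.mul_sum]
  rw [Finset.sum_comm]
  refine Finset.sum_congr rfl fun g _ => ?_
  have e : ∀ χ : (G ⧸ N) →* ℂˣ, (χ (q : G ⧸ N) : ℂ)⁻¹ * (charMul N χ ρ g * σ g⁻¹) =
      (χ ((q : G ⧸ N)⁻¹ * g) : ℂ) * (ρ g * σ g⁻¹) := fun χ => by
    simp [charMul]; ring
  simp_rw [e]
  rw [← Finset.sum_mul]
  split_ifs with h
  · have h : (g : G ⧸ N) = q := h
    simp [h]
  · rw [aux_sum_char N hQ, zero_mul, mul_zero]
    intro h1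
    exact h (inv_mul_eq_one.1 h1).symm

open Classical in
lemma aux_K_zero [Fintype G] (N : Subgroup G) [N.Normal]
    (hQ : ∀ a b : G ⧸ N, a * b = b * a) (q : G) {ρ σ : G → ℂ} (hρ : IsIrrChar G ρ)
    (hσ : IsIrrChar G σ) (hne : σ ∉ qhatOrbit N ρ) :
    ∑ g : G, (if g ∈ coset N q then ρ g * σ g⁻¹ else 0) = 0 := by
  have := Fintype.ofFinite ((G ⧸ N) →* ℂˣ)
  have h := aux_K N hQ q ρ σ
  rw [Finset.sum_eq_zero (s := Finset.univ (α := (G ⧸ N) →* ℂˣ))] at h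
  · simpa using h
  · intro χ _
    rw [aux_irr_orth (aux_irr_mul N χ hρ) hσ (fun h => hne ⟨χ, h.symm⟩), mul_zero]

open Classical in
lemma aux_K_ne [Fintype G] (N : Subgroup G) [N.Normal]
    (hQ : ∀ a b : G ⧸ N, a * b = b * a) (q : G) {ρ : G → ℂ} (hρ : IsIrrChar G ρ)
    (hnz : ∃ g ∈ coset N q, ρ g ≠ 0) :
    ∑ g : G, (if g ∈ coset N q then ρ g * ρ g⁻¹ else 0) ≠ 0 := by
  have := Fintype.ofFinite ((G ⧸ N) →* ℂˣ)
  have h := aux_K N hQ q ρ ρ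
  have e : ∀ χ : (G ⧸ N) →* ℂˣ, (χ (q : G ⧸ N) : ℂ)⁻¹ * ∑ g : G, charMul N χ ρ g * ρ g⁻¹ =
      if charMul N χ ρ = ρ then (Nat.card G : ℂ) else 0 := by
    intro χ
    split_ifs with hχ
    · obtain ⟨g, hg, hg0⟩ := hnz
      have h1 := congrFun hχ g
      have hg : (g : G ⧸ N) = q := hg
      rw [charMul, hg] at h1
      have h2 : (χ (q : G ⧸ N) : ℂ) = 1 := by
        exact mul_right_cancel₀ hg0 (by rw [h1, one_mul])
      rw [h2, hχ, aux_irr_norm hρ]; simp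
    · rw [aux_irr_orth (aux_irr_mul N χ hρ) hρ hχ, mul_zero]
  intro h0
  simp_rw [e] at h
  rw [h0, mul_zero, ← Finset.sum_filter, Finset.sum_const, nsmul_eq_mul, eq_comm,
    mul_eq_zero] at h
  rcases h with h | h
  · have h : _ = _ := Nat.cast_eq_zero.1 h
    rw [Finset.card_eq_zero] at h
    have : (1 : (G ⧸ N) →* ℂˣ) ∈ (Finset.univ.filter fun χ => charMul N χ ρ = ρ) := by
      simp only [Finset.mem_filter, Finset.mem_univ, true_and]
      ext g; simp [charMul]
    rw [h] at this
    simp at this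
  · exact NeZero.ne (Nat.card G : ℂ) h

end Aux
/-- If `N ⊴ G` with `G ⧸ N` abelian and `q ∈ G`, the number of conjugacy
classes of `G` contained in `qN` equals the number of `Q̂`-orbits on the irreducible
characters of `G` containing a character not identically zero on `qN`. -/
theorem conjClasses_coset_card_eq_orbit_card
    (G : Type) [Group G] [Fintype G] (N : Subgroup G) [N.Normal]
    (hQ : ∀ a b : G ⧸ N, a * b = b * a) (q : G) :
    (Cset N q).ncard = (Rset N q).ncard := by
  classical
  have hR : ∀ S : Rset N q, ∃ ρ, IsIrrChar G ρ ∧ S.1 = qhatOrbit N ρ ∧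
      ∃ g ∈ coset N q, ρ g ≠ 0 := by
    rintro ⟨S, ⟨ρ, hρ, rfl⟩, ρ', ⟨χ, rfl⟩, g, hg, h⟩
    exact ⟨ρ, hρ, rfl, g, hg, fun h0 => h (by simp [charMul, h0])⟩
  choose r hirr horb hnz using hR
  have hself : ∀ σ : G → ℂ, σ ∈ qhatOrbit N σ := fun σ => ⟨1, by ext g; simp [charMul]⟩
  -- orbits are determined by any of their members
  have horb_eq : ∀ ρ σ : G → ℂ, σ ∈ qhatOrbit N ρ → qhatOrbit N σ = qhatOrbit N ρ := by
    rintro ρ σ ⟨χ, rfl⟩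
    ext τ
    constructor
    · rintro ⟨ψ, rfl⟩
      exact ⟨ψ * χ, by ext g; simp [charMul, mul_assoc]⟩
    · rintro ⟨ψ, rfl⟩
      refine ⟨ψ * χ⁻¹, ?_⟩
      ext g
      simp [charMul, mul_assoc]
  let out : ConjClasses G → G := fun c => Quotient.out (s := IsConj.setoid G) c
  have hout : ∀ ρ : G → ℂ, (∀ g k : G, ρ (k * g * k⁻¹) = ρ g) →
      ∀ g, ρ (out (ConjClasses.mk g)) = ρ g := fun ρ h g => aux_class h g
  -- the rows are linearly independent
  let v : Rset N q → (Cset N q → ℂ) := fun S c => r S (out c.1)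
  have hv : LinearIndependent ℂ v := by
    rw [linearIndependent_iff']
    intro s c hc T hT
    have h1 : ∀ g ∈ coset N q, ∑ S ∈ s, c S * r S g = 0 := by
      intro g hg
      have := congrFun hc ⟨ConjClasses.mk g, (aux_mem_Cset N hQ q g).2 hg⟩
      simpa [v, hout _ (aux_irr_conj (hirr _))] using this
    have h2 : ∑ S ∈ s, c S * ∑ g : G, (if g ∈ coset N q then r S g * r T g⁻¹ else 0) = 0 := by
      simp_rw [Finset.mul_sum]
      rw [Finset.sum_comm]
      refine Finset.sum_eq_zero fun g _ => ?_
      by_cases hg : g ∈ coset N q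
      · simp only [hg, if_true, ← mul_assoc]
        rw [← Finset.sum_mul, h1 g hg, zero_mul]
      · simp [hg]
    rw [Finset.sum_eq_single_of_mem T hT] at h2
    · exact (mul_eq_zero.1 h2).resolve_right (aux_K_ne N hQ q (hirr T) (hnz T))
    · intro S _ hST
      rw [aux_K_zero N hQ q (hirr S) (hirr T), mul_zero]
      intro hm
      apply hST
      apply Subtype.ext
      rw [horb S, horb T, horb_eq _ _ hm]
  have hfinR : Finite (Rset N q) := hv.finite_of_isNoetherian
  have := Fintype.ofFinite (Rset N q)
  have := Fintype.ofFinite (Cset N q)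
  have hle1 : Fintype.card (Rset N q) ≤ Fintype.card (Cset N q) := by
    simpa using hv.fintype_card_le_finrank
  -- extension by zero
  let ex : (Cset N q → ℂ) → G → ℂ := fun f g =>
    if h : ConjClasses.mk g ∈ Cset N q then f ⟨ConjClasses.mk g, h⟩ else 0
  let P : (Cset N q → ℂ) →ₗ[ℂ] (Rset N q → ℂ) :=
    { toFun := fun f S => ∑ g, ex f g * r S g
      map_add' := fun f f' => by
        ext S
        simp only [Pi.add_apply, ← Finset.sum_add_distrib]
        refine Finset.sum_congr rfl fun g _ => ?_
        by_cases h : ConjClasses.mk g ∈ Cset N q <;> simp [ex, h, add_mul]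
      map_smul' := fun c f => by
        ext S
        simp only [Pi.smul_apply, smul_eq_mul, RingHom.id_apply, Finset.mul_sum]
        refine Finset.sum_congr rfl fun g _ => ?_
        by_cases h : ConjClasses.mk g ∈ Cset N q <;> simp [ex, h, mul_assoc] }
  have hP : Function.Injective P := by
    rw [injective_iff_map_eq_zero]
    intro f hf
    have hex : ex f = 0 := by
      apply aux_complete
      · intro g k
        have : ConjClasses.mk (k * g * k⁻¹) = ConjClasses.mk g :=
          ConjClasses.mk_eq_mk_iff_isConj.2 (isConj_iff.2 ⟨k⁻¹, by group⟩)
        simp only [ex, this]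
      · intro ρ hρ
        by_cases hz : ∃ g ∈ coset N q, ρ g ≠ 0
        · obtain ⟨g, hg, hg0⟩ := hz
          let S : Rset N q := ⟨qhatOrbit N ρ, ⟨ρ, hρ, rfl⟩, ρ, hself ρ, g, hg, hg0⟩
          have hm : ρ ∈ qhatOrbit N (r S) := by
            rw [← horb S]; exact hself ρ
          obtain ⟨χ, hχ⟩ := hm
          have hS : ∑ g, ex f g * r S g = 0 := congrFun hf S
          have : ∑ g, ex f g * ρ g = (χ (q : G ⧸ N) : ℂ) * ∑ g, ex f g * r S g := by
            rw [Finset.mul_sum]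
            refine Finset.sum_congr rfl fun g _ => ?_
            by_cases h : ConjClasses.mk g ∈ Cset N q
            · have hg : (g : G ⧸ N) = q := (aux_mem_Cset N hQ q g).1 h
              rw [hχ, charMul, hg]; ring
            · simp [ex, h]
          rw [this, hS, mul_zero]
        · push Not at hz
          refine Finset.sum_eq_zero fun g _ => ?_
          by_cases h : ConjClasses.mk g ∈ Cset N q
          · rw [hz g ((aux_mem_Cset N hQ q g).1 h), mul_zero]
          · simp [ex, h]
    ext ⟨c, hc⟩
    obtain ⟨g, rfl⟩ := ConjClasses.mk_surjective c
    have := congrFun hex g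
    simpa [ex, hc] using this
  have hle2 : Fintype.card (Cset N q) ≤ Fintype.card (Rset N q) := by
    simpa using LinearMap.finrank_le_finrank_of_injective hP
  rw [← Nat.card_coe_set_eq, ← Nat.card_coe_set_eq, Nat.card_eq_fintype_card,
    Nat.card_eq_fintype_card]
  exact le_antisymm hle2 hle1
end

section
/- Let G be a finite group, N a normal subgroup of G with Q = G/N abelian, and q ∈ G. Choose a representative ρ for each Q̂-orbit in R_q and a representative g for each conjugacy class in C_q. Then the square matrix M_q with rows indexed by R_q and columns indexed by C_q, whose ([ρ],[g]) entry is √(#[g]·#[ρ]/#G) · ρ(g), is unitary (where #[g] is the size of the conjugacy class of g and #[ρ] is the size of the Q̂-orbit of ρ). -/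
open scoped BigOperators

variable {G : Type} [Group G]

open Module in
theorem trace_conj_aux {V : Type} [AddCommGroup V] [Module ℂ V] [FiniteDimensional ℂ V]
    (f g : V →ₗ[ℂ] V) (n : ℕ) (hn : 0 < n) (hf : f ^ n = 1) (hgf : g * f = 1) :
    LinearMap.trace ℂ V g = (starRingEnd ℂ) (LinearMap.trace ℂ V f) := by
  have hss : End.IsSemisimple f := by
    apply Module.End.isSemisimple_of_squarefree_aeval_eq_zero (p := Polynomial.X ^ n - 1)
    · have : (Polynomial.X ^ n - 1 : Polynomial ℂ).Separable := by
        apply Polynomial.separable_X_pow_sub_C (1:ℂ) (by exact_mod_cast hn.ne') one_ne_zero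
      exact this.squarefree
    · simp [hf]
  have hint : DirectSum.IsInternal (fun μ : ℂ => End.eigenspace f μ) := by
    rw [DirectSum.isInternal_submodule_iff_iSupIndep_and_iSup_eq_top]
    refine ⟨End.eigenspaces_iSupIndep f, ?_⟩
    have := End.iSup_maxGenEigenspace_eq_top f
    simpa [hss.isFinitelySemisimple.maxGenEigenspace_eq_eigenspace] using this
  have hmu : ∀ (μ : ℂ) (v : V), v ∈ End.eigenspace f μ → v ≠ 0 → g v = (starRingEnd ℂ) μ • v := by
    intro μ v hv hv0
    have hfv : f v = μ • v := by simpa [End.mem_eigenspace_iff] using hv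
    have hpow : ∀ m : ℕ, (f ^ m) v = μ ^ m • v := by
      intro m
      induction m with
      | zero => simp
      | succ k ih => rw [pow_succ', Module.End.mul_apply, ih, map_smul, hfv, smul_smul, pow_succ]
    have h1 : μ ^ n = 1 := by
      have := hpow n
      rw [hf, Module.End.one_apply] at this
      have h2 : (μ ^ n - 1) • v = 0 := by rw [sub_smul, ← this, one_smul, sub_self]
      rcases smul_eq_zero.1 h2 with h | h
      · exact sub_eq_zero.1 h
      · exact absurd h hv0
    have hnorm : ‖μ‖ = 1 := Complex.norm_eq_one_of_pow_eq_one h1 hn.ne'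
    have hcm : (starRingEnd ℂ) μ * μ = 1 := by
      rw [Complex.conj_mul', hnorm]; simp
    have : g (f v) = v := by
      rw [← Module.End.mul_apply, hgf, Module.End.one_apply]
    rw [hfv, map_smul] at this
    calc g v = ((starRingEnd ℂ) μ * μ) • g v := by rw [hcm, one_smul]
      _ = _ := by rw [mul_smul, this]
  have hmu' : ∀ (μ : ℂ) (v : V), v ∈ End.eigenspace f μ → g v = (starRingEnd ℂ) μ • v := by
    intro μ v hv
    by_cases h : v = 0
    · simp [h]
    · exact hmu μ v hv h
  have hmf : ∀ μ : ℂ, Set.MapsTo f (End.eigenspace f μ) (End.eigenspace f μ) := by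
    intro μ v hv
    have : f v = μ • v := by simpa [End.mem_eigenspace_iff] using hv
    rw [this]; exact Submodule.smul_mem _ _ hv
  have hmg : ∀ μ : ℂ, Set.MapsTo g (End.eigenspace f μ) (End.eigenspace f μ) := by
    intro μ v hv
    rw [hmu' μ v hv]; exact Submodule.smul_mem _ _ hv
  have hfin : {μ : ℂ | End.eigenspace f μ ≠ ⊥}.Finite :=
    WellFoundedGT.finite_ne_bot_of_iSupIndep (End.eigenspaces_iSupIndep f)
  rw [LinearMap.trace_eq_sum_trace_restrict' hint hfin hmf,
    LinearMap.trace_eq_sum_trace_restrict' hint hfin hmg, map_sum]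
  refine Finset.sum_congr rfl fun μ _ => ?_
  have e1 : f.restrict (hmf μ) = μ • (1 : End ℂ (End.eigenspace f μ)) := by
    ext ⟨v, hv⟩
    exact End.mem_eigenspace_iff.1 hv
  have e2 : g.restrict (hmg μ) = (starRingEnd ℂ) μ • (1 : End ℂ (End.eigenspace f μ)) := by
    ext ⟨v, hv⟩
    exact hmu' μ v hv
  rw [e1, e2]
  simp

theorem irrchar_conj {G : Type} [Group G] [Fintype G] (ρ : G → ℂ) (h : IsIrrChar G ρ) (g : G) :
    ρ g⁻¹ = (starRingEnd ℂ) (ρ g) := by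
  obtain ⟨V, _, rfl⟩ := h
  refine trace_conj_aux (V.ρ g) (V.ρ g⁻¹) (Fintype.card G) Fintype.card_pos ?_ ?_
  · rw [← map_pow, pow_card_eq_one, map_one]
  · rw [← map_mul, inv_mul_cancel, map_one]

theorem irrchar_classfun {G : Type} [Group G] (ρ : G → ℂ) (h : IsIrrChar G ρ) (g k : G) :
    ρ (k * g * k⁻¹) = ρ g := by
  obtain ⟨V, _, rfl⟩ := h
  simp

open Classical in
theorem irrchar_orth {G : Type} [Group G] [Fintype G] (ρ σ : G → ℂ)
    (h : IsIrrChar G ρ) (h' : IsIrrChar G σ) :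
    ∑ g, ρ g * (starRingEnd ℂ) (σ g) = if ρ = σ then (Fintype.card G : ℂ) else 0 := by
  have hc : ∀ g, (starRingEnd ℂ) (σ g) = σ g⁻¹ := fun g => (irrchar_conj σ h' g).symm
  simp_rw [hc]
  obtain ⟨V, _, rfl⟩ := h
  obtain ⟨W, _, rfl⟩ := h'
  have hne : (Nat.card G : ℂ) ≠ 0 := by simp
  have := invertibleOfNonzero hne
  split_ifs with he
  · rw [← he]
    have := (FDRep.simple_iff_char_is_norm_one V).1 inferInstance
    simpa using this
  · have := FDRep.char_orthonormal V W
    rw [if_neg] at this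
    · simpa using this
    · rintro ⟨i⟩
      exact he (FDRep.char_iso i)

theorem irrchar_of_norm {G : Type} [Group G] [Fintype G] {V : Type} [AddCommGroup V] [Module ℂ V]
    [FiniteDimensional ℂ V] (ρ : Representation ℂ G V)
    (h : ∑ g : G, ρ.character g * ρ.character g⁻¹ = Nat.card G) :
    IsIrrChar G ρ.character :=
  ⟨FDRep.of ρ, (FDRep.simple_iff_char_is_norm_one (FDRep.of ρ)).2 h, rfl⟩

theorem irrchar_of_irr {G : Type} [Group G] [Fintype G] {V : Type} [AddCommGroup V] [Module ℂ V]
    [FiniteDimensional ℂ V] (ρ : Representation ℂ G V) [ρ.IsIrreducible] :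
    IsIrrChar G ρ.character := by
  have hne : (Nat.card G : ℂ) ≠ 0 := by simp
  have := invertibleOfNonzero hne
  apply irrchar_of_norm
  have := Representation.char_orthonormal ρ ρ
  rw [if_pos ⟨Representation.Equiv.refl ρ⟩, inv_mul_eq_one₀ hne] at this
  exact this.symm

theorem irrchar_twist {G : Type} [Group G] [Fintype G] (N : Subgroup G) [N.Normal]
    (χ : (G ⧸ N) →* ℂˣ) (ρ : G → ℂ) (h : IsIrrChar G ρ) : IsIrrChar G (charMul N χ ρ) := by
  obtain ⟨V, _, rfl⟩ := h
  let σ : Representation ℂ G V :=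
    { toFun := fun g => (χ (g : G ⧸ N) : ℂ) • V.ρ g
      map_one' := by simp
      map_mul' := fun a b => by
        simp only [QuotientGroup.mk_mul, map_mul, Units.val_mul]
        rw [smul_mul_smul_comm] }
  have hσ : σ.character = charMul N χ V.character := by
    ext g
    show LinearMap.trace ℂ V ((χ (g : G ⧸ N) : ℂ) • V.ρ g) = _
    rw [map_smul]; rfl
  rw [← hσ]
  apply irrchar_of_norm
  rw [← (FDRep.simple_iff_char_is_norm_one V).1 inferInstance, hσ]
  refine Finset.sum_congr rfl fun g _ => ?_
  simp only [charMul]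
  have : (χ (g : G ⧸ N) : ℂ) * (χ ((g⁻¹ : G) : G ⧸ N) : ℂ) = 1 := by
    rw [← Units.val_mul, ← map_mul]; simp
  linear_combination (V.character g * V.character g⁻¹) * this

theorem irrchar_complete {G : Type} [Group G] [Fintype G] (f : G → ℂ)
    (hf : ∀ g k : G, f (k * g * k⁻¹) = f g)
    (h : ∀ ρ, IsIrrChar G ρ → ∑ g, f g * ρ g = 0) : f = 0 := by
  let x : (MonoidAlgebra ℂ G) := ∑ g, MonoidAlgebra.single g (f g)
  have key : ∀ S : Submodule (MonoidAlgebra ℂ G) (MonoidAlgebra ℂ G), IsSimpleModule (MonoidAlgebra ℂ G) S → ∀ s ∈ S, x * s = 0 := by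
    intro S hS s hs
    have hfd : FiniteDimensional ℂ S :=
      inferInstanceAs (FiniteDimensional ℂ (S.restrictScalars ℂ))
    let σ : Representation ℂ G S := Representation.ofModule' S
    have hsm : ∀ (r : MonoidAlgebra ℂ G) (m : S), σ.asAlgebraHom r m = r • m := by
      intro r m
      have : σ.asAlgebraHom = Algebra.lsmul ℂ ℂ S := by
        exact (MonoidAlgebra.lift ℂ _ G).apply_symm_apply _
      rw [this]; rfl
    have hirr : σ.IsIrreducible := by
      rw [Representation.irreducible_iff_isSimpleModule_asModule]
      let e : σ.asModule ≃ₗ[MonoidAlgebra ℂ G] S :=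
        { σ.asModuleEquiv.toAddEquiv with
          map_smul' := fun r m => by
            have := σ.asModuleEquiv_map_smul r m
            rw [hsm] at this
            exact this }
      exact IsSimpleModule.congr e
    let T : S →ₗ[ℂ] S := σ.asAlgebraHom x
    have hT : T = ∑ g, f g • σ g := by
      simp [T, x, Representation.asAlgebraHom_single]
    have hcomm : ∀ k, T ∘ₗ σ k = σ k ∘ₗ T := by
      intro k
      show T * σ k = σ k * T
      rw [hT, Finset.sum_mul, Finset.mul_sum]
      symm
      refine Fintype.sum_equiv (MulAut.conj k).toEquiv _ _ fun g => ?_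
      simp [hf, ← map_mul]
    let Ti : σ.IntertwiningMap σ := ⟨T, fun k => by
      have := hcomm k
      exact this⟩
    obtain ⟨c, hc⟩ :=
      (Representation.IsIrreducible.algebraMap_intertwiningMap_bijective_of_isAlgClosed
        (ρ := σ)).2 Ti
    have hTc : T = c • 1 := by
      have : (Ti : σ.IntertwiningMap σ).toLinearMap = T := rfl
      rw [← this, ← hc]
      rfl
    have htr : LinearMap.trace ℂ _ T = 0 := by
      rw [hT, map_sum]
      simp_rw [map_smul]
      exact h _ (irrchar_of_irr σ)
    have hnt : Nontrivial S := IsSimpleModule.nontrivial (MonoidAlgebra ℂ G) S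
    have hc0 : c = 0 := by
      rw [hTc, map_smul, LinearMap.trace_one, smul_eq_mul] at htr
      rcases mul_eq_zero.1 htr with h | h
      · exact h
      · exact absurd h (by exact_mod_cast Module.finrank_pos.ne')
    have hT0 : T = 0 := by rw [hTc, hc0, zero_smul]
    have h4 : x • (⟨s, hs⟩ : S) = 0 := by
      rw [← hsm]
      show T _ = 0
      rw [hT0]; rfl
    exact congrArg Subtype.val h4
  have hx : x * 1 = 0 := by
    let K : Submodule (MonoidAlgebra ℂ G) (MonoidAlgebra ℂ G) := 
      { carrier := {s | x * s = 0}
        add_mem' := fun {a b} ha hb => by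
          simp only [Set.mem_ofPred_eq] at *; rw [mul_add, ha, hb, add_zero]
        zero_mem' := mul_zero _
        smul_mem' := fun c s hs => by
          have hcom : x * c = c * x := by
            have : ∀ k : G, ∀ r : ℂ, x * MonoidAlgebra.single k r = MonoidAlgebra.single k r * x := by
              intro k r
              rw [Finset.sum_mul, Finset.mul_sum]
              symm
              refine Fintype.sum_equiv (MulAut.conj k).toEquiv _ _ fun g => ?_
              simp [hf, MonoidAlgebra.single_mul_single, mul_comm]
            induction c using MonoidAlgebra.induction_linear with
            | zero => simp
            | add a b ha hb => rw [mul_add, add_mul, ha, hb]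
            | single k r => exact this k r
          simp only [Set.mem_ofPred_eq, smul_eq_mul] at *
          rw [← mul_assoc, hcom, mul_assoc, hs, mul_zero] }
    have hss : IsSemisimpleModule (MonoidAlgebra ℂ G) (MonoidAlgebra ℂ G) := inferInstanceAs (IsSemisimpleModule (MonoidAlgebra ℂ G) (MonoidAlgebra ℂ G))
    have htop := IsSemisimpleModule.sSup_simples_eq_top (MonoidAlgebra ℂ G) (MonoidAlgebra ℂ G)
    have hK : K = ⊤ := by
      rw [eq_top_iff, ← htop]
      apply sSup_le
      intro S hS s hs
      exact key S hS s hs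
    have : (1 : (MonoidAlgebra ℂ G)) ∈ K := by rw [hK]; trivial
    exact this
  rw [mul_one] at hx
  ext g
  have := congrArg (fun y : MonoidAlgebra ℂ G => y.coeff g) hx
  classical
  simpa [x, Finsupp.single_apply] using this

open Classical in
theorem qhat_sum {Q : Type} [Group Q] [Finite Q] (hQ : ∀ a b : Q, a * b = b * a)
    [Fintype (Q →* ℂˣ)] (x : Q) :
    ∑ χ : Q →* ℂˣ, (χ x : ℂ) = if x = 1 then (Fintype.card (Q →* ℂˣ) : ℂ) else 0 := by
  split_ifs with h
  · simp [h]
  · let _ : CommGroup Q := { (inferInstance : Group Q) with mul_comm := hQ }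
    have : NeZero (Monoid.exponent Q) := ⟨Monoid.exponent_ne_zero_of_finite⟩
    obtain ⟨φ, hφ⟩ := CommGroup.exists_apply_ne_one_of_hasEnoughRootsOfUnity Q ℂ h
    have h1 : (φ x : ℂ) * ∑ χ : Q →* ℂˣ, (χ x : ℂ) = ∑ χ : Q →* ℂˣ, (χ x : ℂ) := by
      rw [Finset.mul_sum]
      refine Fintype.sum_equiv (Equiv.mulLeft φ) _ _ fun χ => ?_
      simp
    have h2 : (φ x : ℂ) ≠ 1 := by
      intro hh; exact hφ (Units.ext hh)
    have h3 : ((φ x : ℂ) - 1) * ∑ χ : Q →* ℂˣ, (χ x : ℂ) = 0 := by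
      linear_combination h1
    rcases mul_eq_zero.1 h3 with h | h
    · exact absurd (sub_eq_zero.1 h) h2
    · exact h


theorem charMul_one {G : Type} [Group G] (N : Subgroup G) [N.Normal] (ρ : G → ℂ) :
    charMul N 1 ρ = ρ := by
  ext g; simp [charMul]

theorem charMul_mul {G : Type} [Group G] (N : Subgroup G) [N.Normal]
    (χ ψ : (G ⧸ N) →* ℂˣ) (ρ : G → ℂ) :
    charMul N (χ * ψ) ρ = charMul N χ (charMul N ψ ρ) := by
  ext g; simp [charMul, mul_assoc]

theorem qhatOrbit_eq {G : Type} [Group G] (N : Subgroup G) [N.Normal] (ρ ρ' : G → ℂ)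
    (h : ρ' ∈ qhatOrbit N ρ) : qhatOrbit N ρ' = qhatOrbit N ρ := by
  obtain ⟨χ, rfl⟩ := h
  ext σ
  constructor
  · rintro ⟨ψ, rfl⟩
    exact ⟨ψ * χ, (charMul_mul N _ _ _).symm⟩
  · rintro ⟨ψ, rfl⟩
    refine ⟨ψ * χ⁻¹, ?_⟩
    have he : ψ * χ⁻¹ * χ = ψ := by ext x; simp
    rw [← charMul_mul, he]

open Classical in
theorem orbit_stab {G : Type} [Group G] [Fintype G] (N : Subgroup G) [N.Normal] (ρ : G → ℂ)
    [Fintype ((G ⧸ N) →* ℂˣ)] :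
    (qhatOrbit N ρ).ncard * (Finset.univ.filter fun χ : (G ⧸ N) →* ℂˣ => charMul N χ ρ = ρ).card
      = Fintype.card ((G ⧸ N) →* ℂˣ) := by
  let act : MulAction ((G ⧸ N) →* ℂˣ) (G → ℂ) :=
    { smul := charMul N
      one_smul := charMul_one N
      mul_smul := charMul_mul N }
  have h1 : qhatOrbit N ρ = MulAction.orbit ((G ⧸ N) →* ℂˣ) ρ := by
    ext σ
    constructor
    · rintro ⟨ψ, rfl⟩; exact ⟨ψ, rfl⟩
    · rintro ⟨ψ, rfl⟩; exact ⟨ψ, rfl⟩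
  have h2 : (Finset.univ.filter fun χ : (G ⧸ N) →* ℂˣ => charMul N χ ρ = ρ).card
      = Nat.card (MulAction.stabilizer ((G ⧸ N) →* ℂˣ) ρ) := by
    rw [← Fintype.card_subtype, Fintype.card_eq_nat_card]
    rfl
  rw [h1, h2, ← MulAction.index_stabilizer, mul_comm, Subgroup.card_mul_index,
    Fintype.card_eq_nat_card]

open Classical in
theorem coset_sum {G : Type} [Group G] [Fintype G] (N : Subgroup G) [N.Normal]
    (hQ : ∀ a b : G ⧸ N, a * b = b * a) (q : G) (ρ σ : G → ℂ)
    (h : IsIrrChar G ρ) (h' : IsIrrChar G σ) [Fintype ((G ⧸ N) →* ℂˣ)] :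
    (Fintype.card ((G ⧸ N) →* ℂˣ) : ℂ) *
      ∑ g, (if g ∈ coset N q then ρ g * (starRingEnd ℂ) (σ g) else 0) =
    ∑ χ : (G ⧸ N) →* ℂˣ, (χ ((q : G ⧸ N)⁻¹) : ℂ) *
      (if charMul N χ ρ = σ then (Fintype.card G : ℂ) else 0) := by
  have h1 : ∀ χ : (G ⧸ N) →* ℂˣ, (if charMul N χ ρ = σ then (Fintype.card G : ℂ) else 0)
      = ∑ g : G, (χ (g : G ⧸ N) : ℂ) * ρ g * (starRingEnd ℂ) (σ g) := fun χ =>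
    (irrchar_orth _ _ (irrchar_twist N χ ρ h) h').symm
  simp_rw [h1, Finset.mul_sum]
  rw [Finset.sum_comm]
  refine Finset.sum_congr rfl fun g _ => ?_
  have h2 := qhat_sum hQ ((q : G ⧸ N)⁻¹ * (g : G ⧸ N))
  have h3 : ((q : G ⧸ N)⁻¹ * (g : G ⧸ N) = 1) ↔ g ∈ coset N q := by
    rw [inv_mul_eq_one]; exact eq_comm
  simp_rw [h3] at h2
  have h4 : ∑ χ : (G ⧸ N) →* ℂˣ, (χ ((q : G ⧸ N)⁻¹) : ℂ) *
      ((χ (g : G ⧸ N) : ℂ) * ρ g * (starRingEnd ℂ) (σ g)) =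
      (∑ χ : (G ⧸ N) →* ℂˣ, (χ ((q : G ⧸ N)⁻¹ * (g : G ⧸ N)) : ℂ)) *
        (ρ g * (starRingEnd ℂ) (σ g)) := by
    rw [Finset.sum_mul]
    refine Finset.sum_congr rfl fun χ _ => ?_
    rw [map_mul, Units.val_mul]; ring
  rw [h4, h2]
  split_ifs <;> ring

open Classical in
theorem coset_orth {G : Type} [Group G] [Fintype G] (N : Subgroup G) [N.Normal]
    (hQ : ∀ a b : G ⧸ N, a * b = b * a) (q : G) (ρ σ : G → ℂ)
    (h : IsIrrChar G ρ) (h' : IsIrrChar G σ) (hne : σ ∉ qhatOrbit N ρ) :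
    ∑ g, (if g ∈ coset N q then ρ g * (starRingEnd ℂ) (σ g) else 0) = 0 := by
  have := Fintype.ofFinite ((G ⧸ N) →* ℂˣ)
  have h1 := coset_sum N hQ q ρ σ h h'
  rw [Finset.sum_eq_zero (s := Finset.univ) (f := fun χ : (G ⧸ N) →* ℂˣ => _)] at h1
  · rcases mul_eq_zero.1 h1 with h | h
    · exact absurd h (by exact_mod_cast Fintype.card_ne_zero)
    · exact h
  · intro χ _
    rw [if_neg, mul_zero]
    intro he
    exact hne ⟨χ, he.symm⟩

open Classical in
theorem coset_norm {G : Type} [Group G] [Fintype G] (N : Subgroup G) [N.Normal]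
    (hQ : ∀ a b : G ⧸ N, a * b = b * a) (q : G) (ρ : G → ℂ)
    (h : IsIrrChar G ρ) (hnz : ∃ g ∈ coset N q, ρ g ≠ 0) :
    ((qhatOrbit N ρ).ncard : ℂ) *
      ∑ g, (if g ∈ coset N q then ρ g * (starRingEnd ℂ) (ρ g) else 0) = Fintype.card G := by
  have := Fintype.ofFinite ((G ⧸ N) →* ℂˣ)
  obtain ⟨g0, hg0, hr⟩ := hnz
  have h1 := coset_sum N hQ q ρ ρ h h
  have h2 : ∀ χ : (G ⧸ N) →* ℂˣ, (χ ((q : G ⧸ N)⁻¹) : ℂ) *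
      (if charMul N χ ρ = ρ then (Fintype.card G : ℂ) else 0) =
      if charMul N χ ρ = ρ then (Fintype.card G : ℂ) else 0 := by
    intro χ
    split_ifs with he
    · have h3 := congrFun he g0
      have h4 : (χ (g0 : G ⧸ N) : ℂ) = 1 := by
        have : (χ (g0 : G ⧸ N) : ℂ) * ρ g0 = 1 * ρ g0 := by rw [one_mul]; exact h3
        exact mul_right_cancel₀ hr this
      have h5 : (g0 : G ⧸ N) = (q : G ⧸ N) := hg0
      rw [h5] at h4
      rw [map_inv, Units.val_inv_eq_inv_val, h4]; simp
    · simp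
  simp_rw [h2] at h1
  rw [← Finset.sum_filter (fun χ : (G ⧸ N) →* ℂˣ => charMul N χ ρ = ρ), Finset.sum_const,
    nsmul_eq_mul] at h1
  have h6 := orbit_stab N ρ
  have h7 : ((Finset.univ.filter fun χ : (G ⧸ N) →* ℂˣ => charMul N χ ρ = ρ).card : ℂ) ≠ 0 := by
    intro h0
    have h0' : (Finset.univ.filter fun χ : (G ⧸ N) →* ℂˣ => charMul N χ ρ = ρ).card = 0 := by
      exact_mod_cast h0
    rw [h0', mul_zero] at h6
    exact Fintype.card_ne_zero h6.symm
  rw [← h6] at h1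
  push_cast at h1
  apply mul_left_cancel₀ h7
  rw [← h1]; ring

theorem mk_mem_Cset {G : Type} [Group G] (N : Subgroup G) [N.Normal]
    (hQ : ∀ a b : G ⧸ N, a * b = b * a) (q g : G) :
    ConjClasses.mk g ∈ Cset N q ↔ g ∈ coset N q := by
  constructor
  · intro h
    exact h ConjClasses.mem_carrier_mk
  · intro h k hk
    rw [ConjClasses.mem_carrier_iff_mk_eq, ConjClasses.mk_eq_mk_iff_isConj, isConj_iff] at hk
    obtain ⟨c, rfl⟩ := hk
    have h' : (((c * k * c⁻¹ : G) : G ⧸ N)) = (q : G ⧸ N) := h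
    show (k : G ⧸ N) = q
    rw [← h', QuotientGroup.mk_mul, QuotientGroup.mk_mul, hQ (c : G ⧸ N), mul_assoc,
      ← QuotientGroup.mk_mul, mul_inv_cancel, QuotientGroup.mk_one, mul_one]

open Classical in
theorem class_sum {G : Type} [Group G] [Fintype G] (N : Subgroup G) [N.Normal]
    (hQ : ∀ a b : G ⧸ N, a * b = b * a) (q : G) [Fintype ↥(Cset N q)]
    (gRep : ↥(Cset N q) → G)
    (hgRep : ∀ c : ↥(Cset N q), gRep c ∈ (c : ConjClasses G).carrier)
    (F : G → ℂ) (hF : ∀ g k : G, F (k * g * k⁻¹) = F g) :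
    ∑ c : ↥(Cset N q), ((c : ConjClasses G).carrier.ncard : ℂ) * F (gRep c) =
      ∑ g, if g ∈ coset N q then F g else 0 := by
  have h1 : ∀ g : G, (if g ∈ coset N q then F g else 0) =
      ∑ c : ↥(Cset N q), if ConjClasses.mk g = (c : ConjClasses G) then F g else 0 := by
    intro g
    split_ifs with h
    · have hm := (mk_mem_Cset N hQ q g).2 h
      rw [Finset.sum_eq_single (⟨ConjClasses.mk g, hm⟩ : ↥(Cset N q))]
      · simp
      · intro c _ hc
        rw [if_neg]
        intro he
        exact hc (Subtype.ext he.symm)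
      · simp
    · symm
      apply Finset.sum_eq_zero
      intro c _
      rw [if_neg]
      intro he
      exact h ((mk_mem_Cset N hQ q g).1 (he ▸ c.2))
  simp_rw [h1]
  rw [Finset.sum_comm]
  refine Finset.sum_congr rfl fun c _ => ?_
  have h2 : ∀ g : G, (if ConjClasses.mk g = (c : ConjClasses G) then F g else 0) =
      if ConjClasses.mk g = (c : ConjClasses G) then F (gRep c) else 0 := by
    intro g
    split_ifs with h
    · have := hgRep c
      rw [ConjClasses.mem_carrier_iff_mk_eq, ← h, ConjClasses.mk_eq_mk_iff_isConj,
        isConj_iff] at this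
      obtain ⟨k, rfl⟩ := this
      exact hF _ _
    · rfl
  simp_rw [h2]
  rw [← Finset.sum_filter, Finset.sum_const, nsmul_eq_mul]
  congr 2
  rw [← Set.ncard_coe_finset]
  congr 1
  ext g
  simp [ConjClasses.mem_carrier_iff_mk_eq]

theorem matrix_Mq_unitary
    (G : Type) [Group G] [Fintype G] (N : Subgroup G) [N.Normal]
    (hQ : ∀ a b : G ⧸ N, a * b = b * a) (q : G)
    [Fintype ↥(Rset N q)] [Fintype ↥(Cset N q)]
    [DecidableEq ↥(Rset N q)] [DecidableEq ↥(Cset N q)]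
    (rep : ↥(Rset N q) → (G → ℂ))
    (hrep : ∀ S : ↥(Rset N q), rep S ∈ (S : Set (G → ℂ)))
    (gRep : ↥(Cset N q) → G)
    (hgRep : ∀ c : ↥(Cset N q), gRep c ∈ (c : ConjClasses G).carrier)
    (M : Matrix ↥(Rset N q) ↥(Cset N q) ℂ)
    (hM : ∀ S c, M S c =
      (Real.sqrt ((((c : ConjClasses G).carrier.ncard * (qhatOrbit N (rep S)).ncard : ℕ) : ℝ)
          / (Fintype.card G : ℝ)) : ℂ) * rep S (gRep c)) :
    M * M.conjTranspose = 1 ∧ M.conjTranspose * M = 1 := by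
  classical
  have hirr : ∀ S, IsIrrChar G (rep S) := by
    intro S
    obtain ⟨⟨ρ, hρ, hS⟩, -⟩ := S.2
    have := hrep S
    rw [hS] at this
    obtain ⟨χ, hχ⟩ := this
    rw [hχ]
    exact irrchar_twist N χ ρ hρ
  have horb : ∀ S : ↥(Rset N q), (S : Set (G → ℂ)) = qhatOrbit N (rep S) := by
    intro S
    obtain ⟨⟨ρ, hρ, hS⟩, -⟩ := S.2
    have := hrep S
    rw [hS] at this
    rw [hS, qhatOrbit_eq N _ _ this]
  have hnz : ∀ S, ∃ g ∈ coset N q, rep S g ≠ 0 := by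
    intro S
    obtain ⟨-, ρ', hρ', g, hg, hne⟩ := S.2
    rw [horb S] at hρ'
    obtain ⟨χ, rfl⟩ := hρ'
    exact ⟨g, hg, fun h0 => hne (by simp [charMul, h0])⟩
  let a : ↥(Rset N q) → ℂ := fun S =>
    (Real.sqrt (((qhatOrbit N (rep S)).ncard : ℝ) / (Fintype.card G : ℝ)) : ℂ)
  let b : ↥(Cset N q) → ℂ := fun c => (Real.sqrt ((c : ConjClasses G).carrier.ncard : ℝ) : ℂ)
  have hM' : ∀ S c, M S c = a S * b c * rep S (gRep c) := by
    intro S c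
    rw [hM]
    congr 1
    simp only [a, b]
    rw [← Complex.ofReal_mul, ← Real.sqrt_mul (by positivity)]
    congr 2
    push_cast
    ring
  have hbb : ∀ c, b c * b c = ((c : ConjClasses G).carrier.ncard : ℂ) := by
    intro c
    simp only [b]
    rw [← Complex.ofReal_mul, Real.mul_self_sqrt (by positivity)]
    simp
  have haa : ∀ S, a S * a S = ((qhatOrbit N (rep S)).ncard : ℂ) / (Fintype.card G : ℂ) := by
    intro S
    simp only [a]
    rw [← Complex.ofReal_mul, Real.mul_self_sqrt (by positivity)]
    simp
  have hG0 : (Fintype.card G : ℂ) ≠ 0 := by exact_mod_cast Fintype.card_ne_zero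
  have hb0 : ∀ c, b c ≠ 0 := by
    intro c h0
    have h1 := hbb c
    rw [h0, mul_zero] at h1
    have h2 : (c : ConjClasses G).carrier.ncard = 0 := by exact_mod_cast h1.symm
    rw [Set.ncard_eq_zero (Set.toFinite _)] at h2
    have := hgRep c
    rw [h2] at this
    exact this
  have ha0 : ∀ S, a S ≠ 0 := by
    intro S h0
    have h1 := haa S
    rw [h0, mul_zero] at h1
    have h3 := coset_norm N hQ q (rep S) (hirr S) (hnz S)
    have h2 : ((qhatOrbit N (rep S)).ncard : ℂ) = 0 := by
      rcases div_eq_zero_iff.1 h1.symm with h | h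
      · exact h
      · exact absurd h hG0
    rw [h2, zero_mul] at h3
    exact hG0 h3.symm
  have hrow : M * M.conjTranspose = 1 := by
    ext S T
    rw [Matrix.mul_apply]
    have h1 : ∀ c, M S c * M.conjTranspose c T = a S * a T *
        (((c : ConjClasses G).carrier.ncard : ℂ) *
          (rep S (gRep c) * (starRingEnd ℂ) (rep T (gRep c)))) := by
      intro c
      rw [Matrix.conjTranspose_apply, hM', hM', ← hbb]
      simp only [star_mul', a, b, RCLike.star_def, Complex.conj_ofReal]
      ring
    simp_rw [h1]
    rw [← Finset.mul_sum, class_sum N hQ q gRep hgRep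
      (fun g => rep S g * (starRingEnd ℂ) (rep T g)) (fun g k => by
        simp only [irrchar_classfun _ (hirr S), irrchar_classfun _ (hirr T)])]
    by_cases hST : S = T
    · subst hST
      rw [haa, Matrix.one_apply_eq, div_mul_eq_mul_div,
        coset_norm N hQ q (rep S) (hirr S) (hnz S), div_self hG0]
    · rw [coset_orth N hQ q _ _ (hirr S) (hirr T), mul_zero, Matrix.one_apply_ne hST]
      intro hmem
      apply hST
      apply Subtype.ext
      rw [horb S, horb T, qhatOrbit_eq N _ _ hmem]
  refine ⟨hrow, ?_⟩
  have hinj : ∀ v : ↥(Cset N q) → ℂ, (∀ S, ∑ c, M S c * v c = 0) → ∀ c, v c = 0 := by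
    intro v hv
    let f : G → ℂ := fun g =>
      if h : ConjClasses.mk g ∈ Cset N q then v ⟨ConjClasses.mk g, h⟩ / b ⟨ConjClasses.mk g, h⟩
      else 0
    have hfc : ∀ g k : G, f (k * g * k⁻¹) = f g := by
      intro g k
      have : ConjClasses.mk (k * g * k⁻¹) = ConjClasses.mk g := by
        rw [ConjClasses.mk_eq_mk_iff_isConj]
        exact (isConj_iff.2 ⟨k, rfl⟩).symm
      simp only [f, this]
    have hfr : ∀ c, f (gRep c) = v c / b c := by
      intro c
      have h1 : ConjClasses.mk (gRep c) = (c : ConjClasses G) :=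
        ConjClasses.mem_carrier_iff_mk_eq.1 (hgRep c)
      have h2 : ConjClasses.mk (gRep c) ∈ Cset N q := h1 ▸ c.2
      have h3 : (⟨ConjClasses.mk (gRep c), h2⟩ : ↥(Cset N q)) = c := Subtype.ext h1
      simp only [f, dif_pos h2, h3]
    have hf0 : ∀ g, g ∉ coset N q → f g = 0 := by
      intro g hg
      simp only [f]
      rw [dif_neg]
      rwa [mk_mem_Cset N hQ]
    have hsumS : ∀ S, ∑ g, (if g ∈ coset N q then f g * rep S g else 0) = 0 := by
      intro S
      rw [← class_sum N hQ q gRep hgRep (fun g => f g * rep S g) (fun g k => by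
        simp only [irrchar_classfun _ (hirr S), hfc])]
      have h1 := hv S
      have h2 : ∀ c, M S c * v c = a S * (((c : ConjClasses G).carrier.ncard : ℂ) *
          (f (gRep c) * rep S (gRep c))) := by
        intro c
        rw [hM', hfr, ← hbb]
        have := hb0 c
        field_simp
      simp_rw [h2] at h1
      rw [← Finset.mul_sum] at h1
      exact (mul_eq_zero.1 h1).resolve_left (ha0 S)
    have hfz : f = 0 := by
      apply irrchar_complete f hfc
      intro ρ hρ
      by_cases hz : ∃ g ∈ coset N q, ρ g ≠ 0
      · have hmem : qhatOrbit N ρ ∈ Rset N q :=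
          ⟨⟨ρ, hρ, rfl⟩, ρ, ⟨1, (charMul_one N ρ).symm⟩, hz⟩
        let S : ↥(Rset N q) := ⟨qhatOrbit N ρ, hmem⟩
        have h1 : ρ ∈ qhatOrbit N (rep S) := by
          rw [← horb S]
          exact ⟨1, (charMul_one N ρ).symm⟩
        obtain ⟨χ, hχ⟩ := h1
        have h2 : ∀ g, f g * ρ g = (χ (q : G ⧸ N) : ℂ) *
            (if g ∈ coset N q then f g * rep S g else 0) := by
          intro g
          split_ifs with hg
          · have hg' : (g : G ⧸ N) = q := hg
            rw [hχ, charMul, hg']; ring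
          · rw [hf0 g hg]; ring
        simp_rw [h2]
        rw [← Finset.mul_sum, hsumS, mul_zero]
      · push Not at hz
        apply Finset.sum_eq_zero
        intro g _
        by_cases hg : g ∈ coset N q
        · rw [hz g hg, mul_zero]
        · rw [hf0 g hg, zero_mul]
    intro c
    have h1 := hfr c
    rw [hfz] at h1
    rcases div_eq_zero_iff.1 h1.symm with h | h
    · exact h
    · exact absurd h (hb0 c)
  have hX : M * (M.conjTranspose * M - 1) = 0 := by
    rw [Matrix.mul_sub, ← Matrix.mul_assoc, hrow, Matrix.one_mul, Matrix.mul_one, sub_self]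
  rw [← sub_eq_zero]
  ext c d
  refine hinj (fun c => (M.conjTranspose * M - 1 : Matrix ↥(Cset N q) ↥(Cset N q) ℂ) c d) (fun S => ?_) c
  have := congrFun (congrFun hX S) d
  rwa [Matrix.mul_apply] at this
end

section
/- Let G be a finite group, N a normal subgroup with Q = G/N abelian, q ∈ G, and ρ an irreducible complex character of G. Let Stab(ρ) ⊆ Q̂ be the stabilizer of ρ under the tensoring action. If qN does not lie in the intersection of the kernels of all χ ∈ Stab(ρ), then the class function π_q ⊗ ρ is identically zero; otherwise its self inner product ⟨π_q ⊗ ρ, π_q ⊗ ρ⟩ = (1/#G) Σ_{g∈G} (π_q⊗ρ)(g) · conj((π_q⊗ρ)(g)) equals 1/#[ρ], where #[ρ] is the size of the Q̂-orbit of ρ. -/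
open scoped BigOperators

variable {G : Type} [Group G]

lemma aux_trace_conj {V : Type*} [AddCommGroup V] [Module ℂ V] [FiniteDimensional ℂ V]
    (f h : Module.End ℂ V) (hfh : h * f = 1) (n : ℕ) (hn : n ≠ 0) (hf : f ^ n = 1) :
    LinearMap.trace ℂ V h = (starRingEnd ℂ) (LinearMap.trace ℂ V f) := by
  classical
  have hss : f.IsSemisimple := by
    refine Module.End.isSemisimple_of_squarefree_aeval_eq_zero
      (p := (Polynomial.X ^ n - 1 : Polynomial ℂ)) ?_ ?_
    · exact (Polynomial.X_pow_sub_one_separable_iff.2 (by exact_mod_cast hn)).squarefree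
    · simp [hf]
  have htop : ⨆ μ : ℂ, f.eigenspace μ = ⊤ := by
    rw [← Module.End.iSup_maxGenEigenspace_eq_top f]
    exact iSup_congr fun μ => (hss.isFinitelySemisimple.maxGenEigenspace_eq_eigenspace μ).symm
  let S : Set V := {v | ∃ μ : ℂ, f v = μ • v}
  have hS : ⊤ ≤ Submodule.span ℂ S := by
    rw [← htop]
    refine iSup_le fun μ v hv => Submodule.subset_span ⟨μ, Module.End.mem_eigenspace_iff.1 hv⟩
  let b := Module.Basis.ofSpan hS
  have hb : ∀ i, ∃ μ : ℂ, f (b i) = μ • b i := fun i =>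
    Module.Basis.ofSpan_subset hS ⟨i, rfl⟩
  choose μ hμ using hb
  haveI : Fintype ((linearIndepOn_empty ℂ (id : V → V)).extend (Set.empty_subset S)) :=
    FiniteDimensional.fintypeBasisIndex b
  have hpow : ∀ i, μ i ^ n = 1 := by
    intro i
    have h1 : ∀ k : ℕ, (f ^ k) (b i) = μ i ^ k • b i := by
      intro k
      induction k with
      | zero => simp
      | succ k ih => rw [pow_succ', Module.End.mul_apply, ih, map_smul, hμ, smul_smul, pow_succ]
    have h2 := h1 n
    rw [hf] at h2
    have h3 : (1 - μ i ^ n) • b i = 0 := by rw [sub_smul, ← h2]; simp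
    rcases smul_eq_zero.1 h3 with h | h
    · exact (sub_eq_zero.1 h).symm
    · exact absurd h (b.ne_zero i)
  have hh : ∀ i, h (b i) = (starRingEnd ℂ) (μ i) • b i := by
    intro i
    have h1 : h (f (b i)) = b i := by rw [← Module.End.mul_apply, hfh]; rfl
    rw [hμ, map_smul] at h1
    have hnorm : ‖μ i‖ = 1 := Complex.norm_eq_one_of_pow_eq_one (hpow i) hn
    have h2 : (starRingEnd ℂ) (μ i) * μ i = 1 := by
      rw [← Complex.normSq_eq_conj_mul_self, Complex.normSq_eq_norm_sq, hnorm]; simp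
    conv_rhs => rw [← h1, smul_smul, h2, one_smul]
  rw [LinearMap.trace_eq_matrix_trace ℂ b, LinearMap.trace_eq_matrix_trace ℂ b]
  simp [Matrix.trace, LinearMap.toMatrix_apply, hh, hμ]

lemma aux_char_conj {G : Type} [Group G] [Fintype G] (V : FDRep ℂ G) (g : G) :
    V.character g⁻¹ = (starRingEnd ℂ) (V.character g) := by
  refine aux_trace_conj (V.ρ g) (V.ρ g⁻¹) ?_ (Fintype.card G) Fintype.card_ne_zero ?_
  · rw [← map_mul]; simp
  · rw [← map_pow]; simp

noncomputable def auxTwist {G : Type} [Group G] (V : FDRep ℂ G) (χ : G →* ℂˣ) : FDRep ℂ G :=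
  FDRep.of (V := V)
    { toFun := fun g => (χ g : ℂ) • V.ρ g
      map_one' := by simp
      map_mul' := by
        intro a b
        simp [smul_smul, mul_comm] }

lemma auxTwist_char {G : Type} [Group G] (V : FDRep ℂ G) (χ : G →* ℂˣ) (g : G) :
    (auxTwist V χ).character g = (χ g : ℂ) * V.character g := by
  change LinearMap.trace ℂ V ((χ g : ℂ) • V.ρ g) = _
  rw [map_smul]; rfl

lemma auxTwist_simple {G : Type} [Group G] [Fintype G] (V : FDRep ℂ G)
    [CategoryTheory.Simple V] (χ : G →* ℂˣ) : CategoryTheory.Simple (auxTwist V χ) := by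
  have h := (FDRep.simple_iff_char_is_norm_one V).1 inferInstance
  rw [FDRep.simple_iff_char_is_norm_one, ← h]
  refine Finset.sum_congr rfl fun g _ => ?_
  rw [auxTwist_char, auxTwist_char, map_inv]
  have : (χ g : ℂ) * ((χ g)⁻¹ : ℂˣ) = 1 := by simp
  linear_combination (V.character g * V.character g⁻¹) * this

open Classical in
lemma aux_inner {G : Type} [Group G] [Fintype G] (V : FDRep ℂ G)
    [CategoryTheory.Simple V] (χ : G →* ℂˣ) :
    (Fintype.card G : ℂ)⁻¹ * ∑ g : G, ((χ g : ℂ) * V.character g) * (starRingEnd ℂ) (V.character g)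
      = if (∀ g, (χ g : ℂ) * V.character g = V.character g) then 1 else 0 := by
  haveI := auxTwist_simple V χ
  haveI : Invertible (Nat.card G : ℂ) := invertibleOfNonzero (by simp)
  simp only [← aux_char_conj]
  split_ifs with h
  · have := FDRep.char_orthonormal V V
    rw [if_pos ⟨CategoryTheory.Iso.refl V⟩, Nat.card_eq_fintype_card] at this
    simp only [h]
    exact this
  · have := FDRep.char_orthonormal (auxTwist V χ) V
    rw [if_neg, Nat.card_eq_fintype_card] at this
    · simpa only [auxTwist_char] using this
    · rintro ⟨i⟩
      refine h fun g => ?_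
      rw [← auxTwist_char, FDRep.char_iso i]

lemma aux_conj_unit {Q : Type} [Group Q] [Finite Q] (χ : Q →* ℂˣ) (x : Q) :
    (starRingEnd ℂ) (χ x : ℂ) = ((χ x)⁻¹ : ℂˣ) := by
  have hp : (χ x : ℂ) ^ Nat.card Q = 1 := by
    rw [← Units.val_pow_eq_pow_val, ← map_pow]; simp
  have hnorm : ‖(χ x : ℂ)‖ = 1 := Complex.norm_eq_one_of_pow_eq_one hp Nat.card_pos.ne'
  have h2 : (starRingEnd ℂ) (χ x : ℂ) * (χ x : ℂ) = 1 := by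
    rw [← Complex.normSq_eq_conj_mul_self, Complex.normSq_eq_norm_sq, hnorm]; simp
  rw [Units.val_inv_eq_inv_val]
  exact eq_inv_of_mul_eq_one_left h2

/-- The sum is a translate-covariant. -/
lemma aux_shift {G : Type} [Group G] [Fintype G] (N : Subgroup G) [N.Normal] (x : G ⧸ N) (g : G)
    (ψ : (G ⧸ N) →* ℂˣ) :
    piQ N x g = ((ψ x)⁻¹ : ℂˣ) * (ψ (g : G ⧸ N) : ℂ) * piQ N x g := by
  haveI := Fintype.ofFinite ((G ⧸ N) →* ℂˣ)
  unfold piQ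
  rw [finsum_eq_sum_of_fintype]
  rw [mul_left_comm]
  congr 1
  rw [Finset.mul_sum, ← Equiv.sum_comp (Equiv.mulLeft ψ)]
  refine Finset.sum_congr rfl fun χ _ => ?_
  simp only [aux_conj_unit, Equiv.coe_mulLeft, MonoidHom.mul_apply, Units.val_mul, map_mul]
  ring

lemma aux_idem {G : Type} [Group G] [Fintype G] (N : Subgroup G) [N.Normal] (x : G ⧸ N) (g : G) :
    piQ N x g * (starRingEnd ℂ) (piQ N x g) = piQ N x g := by
  by_cases h : ∀ ψ : (G ⧸ N) →* ℂˣ, ψ x = ψ g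
  · have : piQ N x g = 1 := by
      haveI := Fintype.ofFinite ((G ⧸ N) →* ℂˣ)
      unfold piQ
      rw [finsum_eq_sum_of_fintype]
      simp [aux_conj_unit, h]
    simp [this]
  · push Not at h
    obtain ⟨ψ, hψ⟩ := h
    have h1 := aux_shift N x g ψ
    have : piQ N x g = 0 := by
      by_contra h0
      have h2 : ((ψ x)⁻¹ * ψ g : ℂˣ) = (1 : ℂˣ) := by
        ext
        exact mul_right_cancel₀ h0 (by push_cast at *; rw [← h1, one_mul])
      exact hψ (inv_mul_eq_one.1 h2)
    simp [this]

/-- The tensoring action. -/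
def auxAction {G : Type} [Group G] (N : Subgroup G) [N.Normal] :
    MulAction ((G ⧸ N) →* ℂˣ) (G → ℂ) where
  smul χ ρ := charMul N χ ρ
  one_smul ρ := by funext g; change ((1 : ℂˣ) : ℂ) * ρ g = ρ g; simp
  mul_smul χ ψ ρ := by
    funext g
    change ((χ g * ψ g : ℂˣ) : ℂ) * ρ g = χ g * (ψ g * ρ g)
    push_cast; ring

lemma aux_orbit {G : Type} [Group G] [Fintype G] (N : Subgroup G) [N.Normal] (ρ : G → ℂ) :
    (qhatOrbit N ρ).ncard * Nat.card {χ : (G ⧸ N) →* ℂˣ // charMul N χ ρ = ρ}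
      = Nat.card ((G ⧸ N) →* ℂˣ) := by
  letI := auxAction N
  have h1 : qhatOrbit N ρ = MulAction.orbit ((G ⧸ N) →* ℂˣ) ρ := by
    ext s
    constructor
    · rintro ⟨χ, rfl⟩; exact ⟨χ, rfl⟩
    · rintro ⟨χ, rfl⟩; exact ⟨χ, rfl⟩
  have h2 : Nat.card {χ : (G ⧸ N) →* ℂˣ // charMul N χ ρ = ρ}
      = Nat.card (MulAction.stabilizer ((G ⧸ N) →* ℂˣ) ρ) := rfl
  rw [h1, h2, ← Nat.card_coe_set_eq, ← Nat.card_prod]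
  exact Nat.card_congr (MulAction.orbitProdStabilizerEquivGroup _ ρ)

/-- If `qN` is not in the common kernel of the stabilizer of `ρ` in `Q̂`,
then `π_q ⊗ ρ = 0`; otherwise `⟨π_q ⊗ ρ, π_q ⊗ ρ⟩ = 1/#[ρ]`. -/
theorem piq_tensor_selfInner
    (G : Type) [Group G] [Fintype G] (N : Subgroup G) [N.Normal]
    (hQ : ∀ a b : G ⧸ N, a * b = b * a) (q : G)
    (ρ : G → ℂ) (hρ : IsIrrChar G ρ) :
    (¬ (∀ χ : (G ⧸ N) →* ℂˣ, charMul N χ ρ = ρ → χ (q : G ⧸ N) = 1) →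
      (fun g : G => piQ N (q : G ⧸ N) g * ρ g) = 0) ∧
    ((∀ χ : (G ⧸ N) →* ℂˣ, charMul N χ ρ = ρ → χ (q : G ⧸ N) = 1) →
      (Fintype.card G : ℂ)⁻¹ *
          ∑ g : G, (piQ N (q : G ⧸ N) g * ρ g) * (starRingEnd ℂ) (piQ N (q : G ⧸ N) g * ρ g)
        = ((qhatOrbit N ρ).ncard : ℂ)⁻¹) := by
  classical
  obtain ⟨V, hV, rfl⟩ := hρ
  constructor
  · intro h
    push Not at h
    obtain ⟨ψ, hψ, hne⟩ := h
    funext g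
    change piQ N (q : G ⧸ N) g * V.character g = 0
    have h1 := aux_shift N (q : G ⧸ N) g ψ
    have h2 : (ψ (g : G ⧸ N) : ℂ) * V.character g = V.character g := congrFun hψ g
    have h3 : piQ N (q : G ⧸ N) g * V.character g
        = ((ψ q)⁻¹ : ℂˣ) * (piQ N (q : G ⧸ N) g * V.character g) := by
      conv_lhs => rw [h1]
      linear_combination (((ψ q)⁻¹ : ℂˣ) : ℂ) * piQ N (q : G ⧸ N) g * h2
    by_contra h0
    have h4 : ((ψ q)⁻¹ : ℂˣ) = 1 := by
      ext
      exact mul_right_cancel₀ h0 (by rw [← h3]; simp)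
    exact hne (inv_eq_one.1 h4)
  · intro h
    haveI := Fintype.ofFinite ((G ⧸ N) →* ℂˣ)
    have hs : ∀ g : G, (piQ N (q : G ⧸ N) g * V.character g) *
        (starRingEnd ℂ) (piQ N (q : G ⧸ N) g * V.character g)
        = (Nat.card ((G ⧸ N) →* ℂˣ) : ℂ)⁻¹ * ∑ χ : (G ⧸ N) →* ℂˣ,
          (((χ q)⁻¹ : ℂˣ) : ℂ) * (((χ (g : G ⧸ N) : ℂ) * V.character g) *
            (starRingEnd ℂ) (V.character g)) := by
      intro g
      rw [map_mul, mul_mul_mul_comm, aux_idem]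
      unfold piQ
      rw [finsum_eq_sum_of_fintype, mul_assoc, Finset.sum_mul]
      congr 1
      refine Finset.sum_congr rfl fun χ _ => ?_
      rw [aux_conj_unit]; ring
    simp only [hs]
    rw [← Finset.mul_sum, Finset.sum_comm, mul_left_comm, Finset.mul_sum]
    have hi : ∀ χ : (G ⧸ N) →* ℂˣ, (Fintype.card G : ℂ)⁻¹ * ∑ g : G,
        (((χ q)⁻¹ : ℂˣ) : ℂ) * (((χ (g : G ⧸ N) : ℂ) * V.character g) *
            (starRingEnd ℂ) (V.character g))
        = if charMul N χ V.character = V.character then 1 else 0 := by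
      intro χ
      have := aux_inner V (χ.comp (QuotientGroup.mk' N))
      simp only [MonoidHom.comp_apply, QuotientGroup.mk'_apply] at this
      rw [← Finset.mul_sum, mul_left_comm, this]
      have hiff : (∀ g : G, (χ (g : G ⧸ N) : ℂ) * V.character g = V.character g) ↔
        charMul N χ V.character = V.character := ⟨fun h => funext h, fun h g => congrFun h g⟩
      simp only [hiff]
      split_ifs with hc
      · simp [h χ hc]
      · simp
    simp only [hi]
    rw [Finset.sum_boole, ← Fintype.card_subtype, ← Nat.card_eq_fintype_card]
    have ho := aux_orbit N V.character
    have hpos : (Nat.card ((G ⧸ N) →* ℂˣ) : ℂ) ≠ 0 := by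
      exact_mod_cast Nat.card_pos.ne'
    rw [← ho] at hpos ⊢
    push_cast at hpos ⊢
    have ha := left_ne_zero_of_mul hpos
    have hb := right_ne_zero_of_mul hpos
    field_simp
end

section
/- Let G be a finite group, N a normal subgroup with Q = G/N abelian, and q ∈ G. Then the class functions √(#[ρ]) · (π_q ⊗ ρ), where ρ ranges over a set of representatives of the Q̂-orbits in R_q, form a basis of the space of class functions on G that vanish outside the coset qN; in particular, the dimension of this space equals both #R_q and the number of conjugacy classes of G contained in qN. -/
open scoped BigOperators

variable {G : Type} [Group G]

open CategoryTheory in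
theorem irr_orth {G : Type} [Group G] [Fintype G] {ρ σ : G → ℂ} (hρ : IsIrrChar G ρ)
    (hσ : IsIrrChar G σ) (h : ρ ≠ σ) : ∑ g, ρ g * σ g⁻¹ = 0 := by
  obtain ⟨V, hV, rfl⟩ := hρ
  obtain ⟨W, hW, rfl⟩ := hσ
  have := invertibleOfNonzero (NeZero.ne (Nat.card G : ℂ))
  have h1 := FDRep.char_orthonormal V W
  rw [if_neg (fun ⟨i⟩ => h (FDRep.char_iso i))] at h1
  simpa using h1

theorem irr_norm {G : Type} [Group G] [Fintype G] {ρ : G → ℂ} (hρ : IsIrrChar G ρ) :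
    ∑ g, ρ g * ρ g⁻¹ = Nat.card G := by
  obtain ⟨V, hV, rfl⟩ := hρ
  exact (FDRep.simple_iff_char_is_norm_one V).1 hV

theorem irr_class {G : Type} [Group G] {ρ : G → ℂ} (hρ : IsIrrChar G ρ) (g h : G) :
    ρ (h * g * h⁻¹) = ρ g := by
  obtain ⟨V, hV, rfl⟩ := hρ
  exact FDRep.char_conj V g h

theorem irr_twist {G : Type} [Group G] [Fintype G] (N : Subgroup G) [N.Normal]
    (χ : (G ⧸ N) →* ℂˣ) {ρ : G → ℂ} (hρ : IsIrrChar G ρ) : IsIrrChar G (charMul N χ ρ) := by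
  have hn := irr_norm hρ
  obtain ⟨V, hV, rfl⟩ := hρ
  let r : Representation ℂ G V :=
    { toFun := fun g => (χ (g : G ⧸ N) : ℂ) • V.ρ g
      map_one' := by simp
      map_mul' := fun a b => by
        ext v
        simp [smul_smul, mul_comm] }
  have hc : (FDRep.of r).character = charMul N χ V.character := by
    funext g
    change LinearMap.trace ℂ V ((χ (g : G ⧸ N) : ℂ) • V.ρ g) = _
    rw [map_smul]
    rfl
  refine ⟨FDRep.of r, ?_, hc.symm⟩
  rw [FDRep.simple_iff_char_is_norm_one, ← hn, hc]
  refine Finset.sum_congr rfl fun g _ => ?_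
  simp only [charMul, QuotientGroup.mk_inv, map_inv]
  have : (χ (g : G ⧸ N) : ℂ) * ((χ (g : G ⧸ N))⁻¹ : ℂˣ) = 1 := by simp
  linear_combination (V.character g * V.character g⁻¹) * this

theorem irr_of_irreducible {G : Type} [Group G] [Fintype G] {V : Type} [AddCommGroup V] [Module ℂ V]
    [FiniteDimensional ℂ V] (r : Representation ℂ G V) [r.IsIrreducible] :
    IsIrrChar G r.character := by
  refine ⟨FDRep.of r, ?_, rfl⟩
  have := invertibleOfNonzero (NeZero.ne (Nat.card G : ℂ))
  rw [FDRep.simple_iff_char_is_norm_one]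
  have h := Representation.char_orthonormal r r
  rw [if_pos ⟨Representation.Equiv.refl r⟩, inv_mul_eq_one₀ (NeZero.ne _)] at h
  exact h.symm

theorem complete_aux {G : Type} [Group G] [Fintype G] {V : Type} [AddCommGroup V] [Module ℂ V]
    [FiniteDimensional ℂ V] (r : Representation ℂ G V) [r.IsIrreducible] (f : G → ℂ)
    (hf : ∀ g h : G, f (h * g * h⁻¹) = f g)
    (ho : ∀ ρ, IsIrrChar G ρ → ∑ g, f g * ρ g⁻¹ = 0) :
    ∑ g, f g • r g⁻¹ = 0 := by
  have hcomm : ∀ x, (∑ g, f g • r g⁻¹) * r x = r x * (∑ g, f g • r g⁻¹) := by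
    intro x
    rw [Finset.sum_mul, Finset.mul_sum]
    refine Fintype.sum_bijective (fun g => x⁻¹ * g * x⁻¹⁻¹) (MulAut.conj x⁻¹).bijective _ _ ?_
    intro g
    rw [hf]
    simp only [ smul_mul_assoc, mul_smul_comm, ← map_mul]
    congr 2
    group
  let T : Representation.IntertwiningMap r r := ⟨∑ g, f g • r g⁻¹, fun x => hcomm x⟩
  obtain ⟨c, hc⟩ := (Representation.IsIrreducible.algebraMap_intertwiningMap_bijective_of_isAlgClosed
    (ρ := r)).2 T
  have hT : ∑ g, f g • r g⁻¹ = c • (1 : V →ₗ[ℂ] V) := by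
    change T.toLinearMap = _
    rw [← hc]
    rfl
  have htr := congrArg (LinearMap.trace ℂ V) hT
  have h0 := ho _ (irr_of_irreducible r)
  have : LinearMap.trace ℂ V (∑ g, f g • r g⁻¹) = 0 := by
    rw [← h0]
    simp [Representation.character]
  rw [this] at htr
  simp only [map_smul, LinearMap.trace_one, smul_eq_mul] at htr
  rw [hT]
  rcases mul_eq_zero.1 htr.symm with h | h
  · simp [h]
  · have : Subsingleton V := Module.finrank_zero_iff.1 (by exact_mod_cast h)
    exact Subsingleton.elim _ _

theorem complete_mod {G : Type} [Group G] [Fintype G] (f : G → ℂ)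
    (hf : ∀ g h : G, f (h * g * h⁻¹) = f g)
    (ho : ∀ ρ, IsIrrChar G ρ → ∑ g, f g * ρ g⁻¹ = 0)
    (M : Type) [AddCommGroup M] [Module ℂ M] [Module (MonoidAlgebra ℂ G) M]
    [IsScalarTower ℂ (MonoidAlgebra ℂ G) M] [FiniteDimensional ℂ M]
    [IsSimpleModule (MonoidAlgebra ℂ G) M] (v : M) :
    (∑ g, MonoidAlgebra.single g⁻¹ (f g) : MonoidAlgebra ℂ G) • v = 0 := by
  let r : Representation ℂ G M := Representation.ofModule' M
  have hr : ∀ (z : MonoidAlgebra ℂ G) (v : M), r.asAlgebraHom z v = z • v := by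
    intro z v
    simp [r, Representation.ofModule', Representation.asAlgebraHom]
  let e : r.asModule ≃ₗ[MonoidAlgebra ℂ G] M :=
    { r.asModuleEquiv with
      map_smul' := fun z v => hr z (r.asModuleEquiv v) }
  have hs : IsSimpleModule (MonoidAlgebra ℂ G) r.asModule := IsSimpleModule.congr e
  have hirr := (Representation.irreducible_iff_isSimpleModule_asModule r).2 hs
  have h := complete_aux r f hf ho
  rw [← hr, map_sum]
  simp only [Representation.asAlgebraHom_single, h, LinearMap.zero_apply]

theorem complete {G : Type} [Group G] [Fintype G] (f : G → ℂ)
    (hf : ∀ g h : G, f (h * g * h⁻¹) = f g)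
    (ho : ∀ ρ, IsIrrChar G ρ → ∑ g, f g * ρ g⁻¹ = 0) : f = 0 := by
  classical
  let z : MonoidAlgebra ℂ G := ∑ g, MonoidAlgebra.single g⁻¹ (f g)
  have hz : z ∈ Module.jacobson (MonoidAlgebra ℂ G) (MonoidAlgebra ℂ G) := by
    rw [Module.jacobson, Submodule.mem_sInf]
    intro m hm
    have : IsSimpleModule (MonoidAlgebra ℂ G) (MonoidAlgebra ℂ G ⧸ m) :=
      isSimpleModule_iff_isCoatom.2 hm
    have h := complete_mod f hf ho (MonoidAlgebra ℂ G ⧸ m) (Submodule.Quotient.mk 1)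
    rw [← Submodule.Quotient.mk_smul, Submodule.Quotient.mk_eq_zero] at h
    simpa [z] using h
  rw [IsSemisimpleModule.jacobson_eq_bot] at hz
  funext g
  have : z.coeff g⁻¹ = 0 := by rw [(hz : z = 0)]; rfl
  simpa [z, Finsupp.single_apply] using this

theorem irr_li (G : Type) [Group G] [Fintype G] :
    LinearIndependent ℂ (fun ρ : {ρ : G → ℂ // IsIrrChar G ρ} => (ρ : G → ℂ)) := by
  rw [linearIndependent_iff']
  intro s c hc i hi
  have h1 : ∑ g, (∑ ρ ∈ s, c ρ • (ρ : G → ℂ)) g * i.1 g⁻¹ = 0 := by rw [hc]; simp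
  simp only [Finset.sum_apply, Pi.smul_apply, smul_eq_mul, Finset.sum_mul] at h1
  rw [Finset.sum_comm, Finset.sum_eq_single i] at h1
  · simp only [mul_assoc, ← Finset.mul_sum, irr_norm i.2] at h1
    simpa using h1
  · intro b _ hb
    simp only [mul_assoc, ← Finset.mul_sum]
    rw [irr_orth b.2 i.2 (fun h => hb (Subtype.ext h)), mul_zero]
  · exact fun h => (h hi).elim

theorem irr_span {G : Type} [Group G] [Fintype G] (f : G → ℂ)
    (hf : ∀ g h : G, f (h * g * h⁻¹) = f g) :
    f ∈ Submodule.span ℂ {ρ : G → ℂ | IsIrrChar G ρ} := by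
  have : Finite {ρ : G → ℂ // IsIrrChar G ρ} := (irr_li G).finite
  have := Fintype.ofFinite {ρ : G → ℂ // IsIrrChar G ρ}
  let p : G → ℂ := ∑ ρ : {ρ : G → ℂ // IsIrrChar G ρ},
    ((Nat.card G : ℂ)⁻¹ * ∑ g, f g * ρ.1 g⁻¹) • ρ.1
  have hp : p ∈ Submodule.span ℂ {ρ : G → ℂ | IsIrrChar G ρ} :=
    Submodule.sum_mem _ fun ρ _ => Submodule.smul_mem _ _ (Submodule.subset_span ρ.2)
  have h0 : f - p = 0 := by
    apply complete
    · intro g h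
      simp [p, hf, irr_class (Subtype.property _)]
    · intro σ hσ
      have : ∑ g, p g * σ g⁻¹ = ∑ g, f g * σ g⁻¹ := by
        simp only [p, Finset.sum_apply, Pi.smul_apply, smul_eq_mul, Finset.sum_mul]
        rw [Finset.sum_comm, Finset.sum_eq_single ⟨σ, hσ⟩]
        · simp only [mul_assoc, ← Finset.mul_sum, irr_norm hσ]
          rw [mul_comm (∑ g, f g * σ g⁻¹), inv_mul_cancel_left₀ (NeZero.ne _)]
        · intro b _ hb
          simp only [mul_assoc, ← Finset.mul_sum]
          rw [irr_orth b.2 hσ (fun h => hb (Subtype.ext h))]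
          simp
        · simp
      simp [sub_mul, this]
  rw [sub_eq_zero.1 h0]
  exact hp

theorem conj_char {G : Type} [Group G] [Fintype G] (N : Subgroup G) [N.Normal]
    (χ : (G ⧸ N) →* ℂˣ) (x : G ⧸ N) : (starRingEnd ℂ) (χ x : ℂ) = ((χ x)⁻¹ : ℂˣ) := by
  have h : ‖(χ x : ℂ)‖ = 1 := by
    apply Complex.norm_eq_one_of_pow_eq_one (n := Nat.card (G ⧸ N)) _ Nat.card_pos.ne'
    rw [← Units.val_pow_eq_pow_val, ← map_pow, pow_card_eq_one']
    simp
  rw [Units.val_inv_eq_inv_val, Complex.inv_def, Complex.normSq_eq_norm_sq, h]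
  simp

theorem finite_dual {G : Type} [Group G] [Fintype G] (N : Subgroup G) [N.Normal]
    (hQ : ∀ a b : G ⧸ N, a * b = b * a) : Finite ((G ⧸ N) →* ℂˣ) := by
  let inst : CommGroup (G ⧸ N) := { QuotientGroup.Quotient.group N with mul_comm := hQ }
  have := (CommGroup.monoidHom_mulEquiv_of_hasEnoughRootsOfUnity (G ⧸ N) ℂ).some
  exact Finite.of_equiv _ this.symm.toEquiv

theorem exists_char {G : Type} [Group G] [Fintype G] (N : Subgroup G) [N.Normal]
    (hQ : ∀ a b : G ⧸ N, a * b = b * a) (a : G ⧸ N) (ha : a ≠ 1) :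
    ∃ φ : (G ⧸ N) →* ℂˣ, φ a ≠ 1 := by
  let inst : CommGroup (G ⧸ N) := { QuotientGroup.Quotient.group N with mul_comm := hQ }
  exact CommGroup.exists_apply_ne_one_of_hasEnoughRootsOfUnity (G ⧸ N) ℂ ha

open Classical in
theorem piQ_eq {G : Type} [Group G] [Fintype G] (N : Subgroup G) [N.Normal]
    (hQ : ∀ a b : G ⧸ N, a * b = b * a) (q g : G) :
    piQ N (q : G ⧸ N) g = if g ∈ coset N q then 1 else 0 := by
  have := finite_dual N hQ
  have := Fintype.ofFinite ((G ⧸ N) →* ℂˣ)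
  have h1 : piQ N (q : G ⧸ N) g = (Nat.card ((G ⧸ N) →* ℂˣ) : ℂ)⁻¹ *
      ∑ χ : (G ⧸ N) →* ℂˣ, (χ ((q : G ⧸ N)⁻¹ * (g : G ⧸ N)) : ℂ) := by
    simp only [piQ, conj_char, finsum_eq_sum_of_fintype, map_mul, map_inv, Units.val_mul]
  rw [h1]
  split_ifs with h
  · have h : (g : G ⧸ N) = q := h
    simp [h]
  · obtain ⟨φ, hφ⟩ := exists_char N hQ ((q : G ⧸ N)⁻¹ * (g : G ⧸ N))
      (fun h' => h (inv_mul_eq_one.1 h').symm)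
    set a := (q : G ⧸ N)⁻¹ * (g : G ⧸ N)
    have h2 : (φ a : ℂ) * ∑ χ : (G ⧸ N) →* ℂˣ, (χ a : ℂ) = ∑ χ : (G ⧸ N) →* ℂˣ, (χ a : ℂ) := by
      rw [Finset.mul_sum]
      exact Fintype.sum_bijective (fun χ => φ * χ) (Group.mulLeft_bijective φ) _ _
        (fun χ => by simp)
    have h3 : ((φ a : ℂ) - 1) * ∑ χ : (G ⧸ N) →* ℂˣ, (χ a : ℂ) = 0 := by
      linear_combination h2
    rcases mul_eq_zero.1 h3 with h4 | h4
    · exact (hφ (Units.ext (by simpa using sub_eq_zero.1 h4))).elim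
    · rw [h4, mul_zero]

open Classical in
theorem pair_eq {G : Type} [Group G] [Fintype G] (N : Subgroup G) [N.Normal]
    [Fintype ((G ⧸ N) →* ℂˣ)] (q : G) (ρ σ : G → ℂ) :
    ∑ g, piQ N (q : G ⧸ N) g * ρ g * σ g⁻¹ = (Nat.card ((G ⧸ N) →* ℂˣ) : ℂ)⁻¹ *
      ∑ χ : (G ⧸ N) →* ℂˣ, (((χ (q : G ⧸ N))⁻¹ : ℂˣ) : ℂ) *
        ∑ g, charMul N χ ρ g * σ g⁻¹ := by
  simp only [piQ, conj_char, finsum_eq_sum_of_fintype, charMul, Finset.mul_sum, Finset.sum_mul]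
  rw [Finset.sum_comm]
  refine Finset.sum_congr rfl fun χ _ => Finset.sum_congr rfl fun g _ => ?_
  ring

theorem pair_zero {G : Type} [Group G] [Fintype G] (N : Subgroup G) [N.Normal]
    (hQ : ∀ a b : G ⧸ N, a * b = b * a) (q : G) {ρ σ : G → ℂ}
    (hρ : IsIrrChar G ρ) (hσ : IsIrrChar G σ) (h : σ ∉ qhatOrbit N ρ) :
    ∑ g, piQ N (q : G ⧸ N) g * ρ g * σ g⁻¹ = 0 := by
  have := finite_dual N hQ
  have := Fintype.ofFinite ((G ⧸ N) →* ℂˣ)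
  rw [pair_eq, Finset.sum_eq_zero, mul_zero]
  intro χ _
  rw [irr_orth (irr_twist N χ hρ) hσ (fun h' => h ⟨χ, h'.symm⟩), mul_zero]

theorem self_mem_orbit {G : Type} [Group G] (N : Subgroup G) [N.Normal] (ρ : G → ℂ) :
    ρ ∈ qhatOrbit N ρ := ⟨1, (charMul_one N ρ).symm⟩

theorem orbit_eq {G : Type} [Group G] (N : Subgroup G) [N.Normal] {ρ σ : G → ℂ}
    (h : σ ∈ qhatOrbit N ρ) : qhatOrbit N ρ = qhatOrbit N σ := by
  obtain ⟨χ, rfl⟩ := h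
  ext τ
  constructor
  · rintro ⟨ψ, rfl⟩
    exact ⟨ψ * χ⁻¹, by rw [← charMul_mul]; congr 1; ext x; simp⟩
  · rintro ⟨ψ, rfl⟩
    exact ⟨ψ * χ, by rw [← charMul_mul]⟩

theorem pair_self {G : Type} [Group G] [Fintype G] (N : Subgroup G) [N.Normal]
    (hQ : ∀ a b : G ⧸ N, a * b = b * a) (q : G) {ρ : G → ℂ}
    (hρ : IsIrrChar G ρ) (h : ∃ g ∈ coset N q, ρ g ≠ 0) :
    ∑ g, piQ N (q : G ⧸ N) g * ρ g * ρ g⁻¹ ≠ 0 := by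
  classical
  have := finite_dual N hQ
  have := Fintype.ofFinite ((G ⧸ N) →* ℂˣ)
  obtain ⟨g, hg, hgρ⟩ := h
  have hg : (g : G ⧸ N) = q := hg
  have h1 : ∀ χ : (G ⧸ N) →* ℂˣ, (((χ (q : G ⧸ N))⁻¹ : ℂˣ) : ℂ) *
        ∑ g, charMul N χ ρ g * ρ g⁻¹ = if charMul N χ ρ = ρ then (Nat.card G : ℂ) else 0 := by
    intro χ
    split_ifs with hχ
    · have h2 : (χ (q : G ⧸ N) : ℂ) = 1 := by
        have := congrFun hχ g
        simp only [charMul, hg] at this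
        exact (mul_eq_right₀ hgρ).1 this
      rw [hχ, irr_norm hρ, Units.val_inv_eq_inv_val, h2]
      simp
    · rw [irr_orth (irr_twist N χ hρ) hρ hχ, mul_zero]
  rw [pair_eq]
  simp only [h1, ← Finset.sum_filter, Finset.sum_const, nsmul_eq_mul]
  refine mul_ne_zero (inv_ne_zero (NeZero.ne _)) (mul_ne_zero ?_ (NeZero.ne _))
  rw [Nat.cast_ne_zero]
  exact Finset.card_ne_zero_of_mem (a := 1) (by simp [charMul_one])

theorem rset_nonzero {G : Type} [Group G] (N : Subgroup G) [N.Normal] (q : G) {ρ : G → ℂ}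
    (h : qhatOrbit N ρ ∈ Rset N q) : ∃ g ∈ coset N q, ρ g ≠ 0 := by
  obtain ⟨-, ρ', ⟨χ, rfl⟩, g, hg, h⟩ := h
  exact ⟨g, hg, right_ne_zero_of_mul h⟩

theorem coset_conj {G : Type} [Group G] (N : Subgroup G) [N.Normal]
    (hQ : ∀ a b : G ⧸ N, a * b = b * a) (q g h : G) :
    h * g * h⁻¹ ∈ coset N q ↔ g ∈ coset N q := by
  have : ((h * g * h⁻¹ : G) : G ⧸ N) = g := by
    rw [QuotientGroup.mk_mul, QuotientGroup.mk_mul, QuotientGroup.mk_inv, hQ h, mul_inv_cancel_right]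
  simp only [coset, Set.mem_ofPred_eq, this]

theorem finrank_Cset {G : Type} [Group G] [Fintype G] (N : Subgroup G) [N.Normal]
    (hQ : ∀ a b : G ⧸ N, a * b = b * a) (q : G) :
    Module.finrank ℂ (cosetClassFun N q) = (Cset N q).ncard := by
  classical
  let L : (Cset N q → ℂ) →ₗ[ℂ] (G → ℂ) :=
    { toFun := fun c g => if h : ConjClasses.mk g ∈ Cset N q then c ⟨_, h⟩ else 0
      map_add' := fun a b => by funext g; by_cases h : ConjClasses.mk g ∈ Cset N q <;> simp [h]
      map_smul' := fun a b => by funext g; by_cases h : ConjClasses.mk g ∈ Cset N q <;> simp [h] }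
  have hL : ∀ c g, L c g = if h : ConjClasses.mk g ∈ Cset N q then c ⟨_, h⟩ else 0 :=
    fun _ _ => rfl
  have hinj : Function.Injective L := by
    rintro a b hab
    funext ⟨x, hx⟩
    obtain ⟨g, rfl⟩ := ConjClasses.mk_surjective x
    have := congrFun hab g
    simpa [hL, hx] using this
  have hr : LinearMap.range L = cosetClassFun N q := by
    ext f
    constructor
    · rintro ⟨c, rfl⟩
      refine ⟨fun g h => ?_, fun g hg => ?_⟩
      · have : ConjClasses.mk (h * g * h⁻¹) = ConjClasses.mk g := by
          rw [ConjClasses.mk_eq_mk_iff_isConj, isConj_comm, isConj_iff]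
          exact ⟨h, rfl⟩
        simp only [hL, this]
      · rw [hL, dif_neg (fun h => hg ((mk_mem_Cset N hQ q g).1 h))]
    · rintro ⟨h1, h2⟩
      refine ⟨fun x => Quotient.lift f (fun a b hab => ?_) x.1, ?_⟩
      · obtain ⟨c, rfl⟩ := isConj_iff.1 hab
        exact (h1 a c).symm
      · funext g
        rw [hL]
        split_ifs with h
        · rfl
        · exact (h2 g (fun h' => h ((mk_mem_Cset N hQ q g).2 h'))).symm
  have : Fintype (Cset N q) := Fintype.ofFinite _
  rw [← hr, LinearMap.finrank_range_of_inj hinj, Module.finrank_fintype_fun_eq_card,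
    Set.ncard_eq_toFinset_card', Set.toFinset_card]

/-- The class functions `√(#[ρ]) · (π_q ⊗ ρ)`, for `ρ` ranging over a set
`Uq` of representatives of the orbits in `R_q`, form a basis of the space of class
functions vanishing outside `qN`; in particular that space has dimension `#R_q = #C_q`. -/
theorem basis_of_coset_classFun
    (G : Type) [Group G] [Fintype G] (N : Subgroup G) [N.Normal]
    (hQ : ∀ a b : G ⧸ N, a * b = b * a) (q : G)
    (Uq : Set (G → ℂ))
    (hUq1 : ∀ ρ ∈ Uq, IsIrrChar G ρ ∧ qhatOrbit N ρ ∈ Rset N q)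
    (hUq2 : ∀ ρ ∈ Uq, ∀ ρ' ∈ Uq, qhatOrbit N ρ = qhatOrbit N ρ' → ρ = ρ')
    (hUq3 : ∀ S ∈ Rset N q, ∃ ρ ∈ Uq, S = qhatOrbit N ρ)
    (F : ↥Uq → G → ℂ)
    (hF : ∀ ρ : ↥Uq, F ρ = fun g =>
      (Real.sqrt ((qhatOrbit N (ρ : G → ℂ)).ncard : ℝ) : ℂ) *
        (piQ N (q : G ⧸ N) g * (ρ : G → ℂ) g)) :
    (∀ ρ : ↥Uq, F ρ ∈ cosetClassFun N q) ∧
    LinearIndependent ℂ F ∧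
    Submodule.span ℂ (Set.range F) = cosetClassFun N q ∧
    Module.finrank ℂ (cosetClassFun N q) = (Rset N q).ncard ∧
    Module.finrank ℂ (cosetClassFun N q) = (Cset N q).ncard := by
  classical
  have := finite_dual N hQ
  have hsq : ∀ ρ : G → ℂ, (Real.sqrt ((qhatOrbit N ρ).ncard : ℝ) : ℂ) ≠ 0 := by
    intro ρ
    have hfin : (qhatOrbit N ρ).Finite := by
      refine (Set.finite_range (fun χ => charMul N χ ρ)).subset ?_
      rintro _ ⟨χ, rfl⟩
      exact ⟨χ, rfl⟩
    have hpos : 0 < (qhatOrbit N ρ).ncard :=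
      (Set.ncard_pos hfin).2 ⟨ρ, self_mem_orbit N ρ⟩
    rw [Complex.ofReal_ne_zero]
    exact (Real.sqrt_pos.2 (by exact_mod_cast hpos)).ne'
  have hmem : ∀ ρ : ↥Uq, F ρ ∈ cosetClassFun N q := by
    intro ρ
    rw [hF]
    refine ⟨fun g h => ?_, fun g hg => ?_⟩
    · simp only [piQ_eq N hQ, coset_conj N hQ, irr_class (hUq1 ρ ρ.2).1]
    · simp [piQ_eq N hQ, hg]
  have hli : LinearIndependent ℂ F := by
    rw [linearIndependent_iff']
    intro s c hc i hi
    have h1 : ∑ g, (∑ ρ ∈ s, c ρ • F ρ) g * i.1 g⁻¹ = 0 := by rw [hc]; simp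
    simp only [Finset.sum_apply, Pi.smul_apply, smul_eq_mul, Finset.sum_mul] at h1
    rw [Finset.sum_comm] at h1
    have h2 : ∀ ρ : ↥Uq, ∑ g, c ρ * F ρ g * i.1 g⁻¹ =
        c ρ * (Real.sqrt ((qhatOrbit N (ρ : G → ℂ)).ncard : ℝ) : ℂ) *
          ∑ g, piQ N (q : G ⧸ N) g * ρ.1 g * i.1 g⁻¹ := by
      intro ρ
      rw [Finset.mul_sum]
      refine Finset.sum_congr rfl fun g _ => ?_
      rw [hF]
      ring
    simp only [h2] at h1
    rw [Finset.sum_eq_single i] at h1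
    · have h3 := pair_self N hQ q (hUq1 i i.2).1 (rset_nonzero N q (hUq1 i i.2).2)
      rcases mul_eq_zero.1 h1 with h | h
      · exact (mul_eq_zero.1 h).resolve_right (hsq _)
      · exact (h3 h).elim
    · intro b _ hb
      rw [pair_zero N hQ q (hUq1 b b.2).1 (hUq1 i i.2).1, mul_zero]
      intro h
      exact hb (Subtype.ext (hUq2 b b.2 i i.2 (orbit_eq N h)))
    · exact fun h => (h hi).elim
  have hspan : Submodule.span ℂ (Set.range F) = cosetClassFun N q := by
    apply le_antisymm
    · rw [Submodule.span_le]
      rintro _ ⟨ρ, rfl⟩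
      exact hmem ρ
    · intro f hf
      let P : (G → ℂ) →ₗ[ℂ] (G → ℂ) := LinearMap.mulLeft ℂ (piQ N (q : G ⧸ N))
      have hP : P f = f := by
        funext g
        simp only [P, LinearMap.mulLeft_apply, Pi.mul_apply, piQ_eq N hQ]
        split_ifs with h
        · rw [one_mul]
        · rw [zero_mul, hf.2 g h]
      have h1 : Submodule.span ℂ {ρ : G → ℂ | IsIrrChar G ρ} ≤
          (Submodule.span ℂ (Set.range F)).comap P := by
        rw [Submodule.span_le]
        intro ρ hρ
        change P ρ ∈ Submodule.span ℂ (Set.range F)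
        by_cases h : ∃ g ∈ coset N q, ρ g ≠ 0
        · obtain ⟨σ, hσ, hρσ⟩ := hUq3 (qhatOrbit N ρ)
            ⟨⟨ρ, hρ, rfl⟩, ρ, self_mem_orbit N ρ, h⟩
          obtain ⟨χ, hχ⟩ : ρ ∈ qhatOrbit N σ := hρσ ▸ self_mem_orbit N ρ
          have : P ρ = ((χ (q : G ⧸ N) : ℂ) *
              (Real.sqrt ((qhatOrbit N σ).ncard : ℝ) : ℂ)⁻¹) • F ⟨σ, hσ⟩ := by
            funext g
            rw [hF]
            simp only [P, LinearMap.mulLeft_apply, Pi.mul_apply, piQ_eq N hQ, Pi.smul_apply,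
              smul_eq_mul]
            split_ifs with hg
            · have hg : (g : G ⧸ N) = q := hg
              rw [hχ, charMul, hg]
              have := hsq σ
              field_simp
            · simp
          rw [this]
          exact Submodule.smul_mem _ _ (Submodule.subset_span ⟨_, rfl⟩)
        · push Not at h
          have : P ρ = 0 := by
            funext g
            simp only [P, LinearMap.mulLeft_apply, Pi.mul_apply, piQ_eq N hQ]
            split_ifs with hg
            · rw [h g hg]; simp
            · simp
          rw [this]
          exact Submodule.zero_mem _
      have h2 := h1 (irr_span f hf.1)
      rw [Submodule.mem_comap, hP] at h2
      exact h2
  refine ⟨hmem, hli, hspan, ?_, finrank_Cset N hQ q⟩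
  have : Finite ↥Uq := hli.finite
  have : Fintype ↥Uq := Fintype.ofFinite _
  rw [← hspan, finrank_span_eq_card hli, ← Nat.card_eq_fintype_card]
  refine Nat.card_congr (Equiv.ofBijective
    (fun ρ : ↥Uq => (⟨qhatOrbit N ρ.1, (hUq1 ρ ρ.2).2⟩ : ↥(Rset N q))) ⟨?_, ?_⟩)
  · intro a b hab
    exact Subtype.ext (hUq2 a a.2 b b.2 (congrArg Subtype.val hab))
  · rintro ⟨S, hS⟩
    obtain ⟨ρ, hρ, rfl⟩ := hUq3 S hS
    exact ⟨⟨ρ, hρ⟩, rfl⟩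
end
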